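/- arXiv:1504.03227 — 3 statements merged into one kernel-verified Lean document; each statement's English description precedes it below -/
import Mathlib

section
/- Let p ≥ 11 be a prime. Then the sum of 1/(l_1⋯l_6) over all 6-tuples of positive integers with l_1+⋯+l_6 = 2p and each l_i < p is congruent to 40·B_{p-3}² modulo p, and the sum over 6-tuples with l_1+⋯+l_6 = 3p and each l_i < p is congruent to -80·B_{p-3}² modulo p. -/
/-- `x ≡ y (mod p^r)` as p-integral rationals. -/
def ratCong (p r : ℕ) (x y : ℚ) : Prop :=
  ∃ z : ℚ, x - y = (p : ℚ) ^ r * z ∧ ¬ (p ∣ z.den)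

/-- Sum of `1/(l₁⋯lₙ)` over positive `n`-tuples summing to `N` with each `lᵢ < p`. -/
def hsumLt (p n N : ℕ) : ℚ :=
  ∑ l ∈ (Fintype.piFinset fun _ : Fin n => Finset.Ico 1 p) |>.filter
      (fun l => ∑ i, l i = N),
    ∏ i, (1 : ℚ) / l i

open Polynomial in
noncomputable def phi {R : Type*} [CommRing R] (p : ℕ) (T : R) (j : ℕ) : R[X] →ₗ[R] R :=
  Polynomial.lsum fun n => if n % p = j then LinearMap.mulLeft R (T ^ (n / p)) else 0

section phi
open Polynomial
variable {R : Type*} [CommRing R] (p : ℕ) (T : R)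

lemma phi_monomial (j n : ℕ) (a : R) :
    phi p T j (monomial n a) = if n % p = j then T ^ (n / p) * a else 0 := by
  rw [phi, Polynomial.lsum_apply, Polynomial.sum_monomial_index _ _ (by simp)]
  split_ifs <;> simp

lemma phi_Xp (hp : 0 < p) (j : ℕ) (P : R[X]) : phi p T j (X ^ p * P) = T * phi p T j P := by
  induction P using Polynomial.induction_on' with
  | add P Q hP hQ => rw [mul_add, map_add, hP, hQ, map_add, mul_add]
  | monomial n a =>
    rw [X_pow_mul_monomial, phi_monomial, phi_monomial, Nat.add_mod_right, Nat.add_div_right _ hp]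
    split_ifs
    · ring
    · simp

lemma phi_X_succ (j : ℕ) (hj : j + 1 < p) (P : R[X]) :
    phi p T (j + 1) (X * P) = phi p T j P := by
  induction P using Polynomial.induction_on' with
  | add P Q hP hQ => rw [mul_add, map_add, hP, hQ, map_add]
  | monomial n a =>
    rw [X_mul_monomial, phi_monomial, phi_monomial]
    have hn := Nat.div_add_mod n p
    have hlt := Nat.mod_lt n (show 0 < p by omega)
    by_cases h : n % p = j
    · have e : n + 1 = (j + 1) + p * (n / p) := by omega
      have h1 : (n + 1) % p = j + 1 := by
        rw [e, Nat.add_mul_mod_self_left, Nat.mod_eq_of_lt hj]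
      have h2 : (n + 1) / p = n / p := by
        conv_lhs => rw [e]
        rw [Nat.add_mul_div_left _ _ (by omega), Nat.div_eq_of_lt hj, zero_add]
      rw [if_pos h, if_pos h1, h2]
    · rw [if_neg h, if_neg]
      intro h1
      have hn1 := Nat.div_add_mod (n + 1) p
      have e : n = j + p * ((n + 1) / p) := by omega
      apply h
      rw [e, Nat.add_mul_mod_self_left, Nat.mod_eq_of_lt (by omega)]

lemma phi_X_zero (hp : 0 < p) (P : R[X]) :
    phi p T 0 (X * P) = T * phi p T (p - 1) P := by
  induction P using Polynomial.induction_on' with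
  | add P Q hP hQ => rw [mul_add, map_add, hP, hQ, map_add, mul_add]
  | monomial n a =>
    rw [X_mul_monomial, phi_monomial, phi_monomial]
    have hn := Nat.div_add_mod n p
    have hlt := Nat.mod_lt n hp
    by_cases h : n % p = p - 1
    · have e : n + 1 = p * (n / p + 1) := by rw [mul_add]; omega
      have h1 : (n + 1) % p = 0 := by
        rw [e, Nat.mul_mod_right]
      have h2 : (n + 1) / p = n / p + 1 := by
        conv_lhs => rw [e]
        rw [Nat.mul_div_cancel_left _ hp]
      rw [if_pos h, if_pos h1, h2]; ring
    · rw [if_neg h, if_neg, mul_zero]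
      intro h1
      apply h
      have h3 : p * (n / p) + (n % p + 1) = n + 1 := by omega
      rw [← h3, Nat.mul_add_mod] at h1
      have := Nat.le_of_dvd (by omega) (Nat.dvd_of_mod_eq_zero h1)
      omega

lemma phi_deriv [CharP R p] (j : ℕ) (P : R[X]) :
    phi p T j (X * derivative P) = j * phi p T j P := by
  induction P using Polynomial.induction_on' with
  | add P Q hP hQ => rw [map_add, mul_add, map_add, hP, hQ, map_add, mul_add]
  | monomial n a =>
    have : X * derivative (monomial n a) = monomial n ((n : R) * a) := by
      rw [derivative_monomial]
      cases n with
      | zero => simp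
      | succ n => rw [X_mul_monomial, Nat.add_sub_cancel, mul_comm a]
    rw [this, phi_monomial, phi_monomial]
    split_ifs with h
    · have : (n : R) = j := by rw [← h, CharP.cast_eq_mod R p]
      rw [this]; ring
    · simp

lemma phi_mul (hp : 0 < p) (P Q : R[X]) :
    phi p T 0 (P * Q) = phi p T 0 P * phi p T 0 Q +
      T * ∑ j ∈ Finset.Ico 1 p, phi p T j P * phi p T (p - j) Q := by
  induction P using Polynomial.induction_on' with
  | add P P' hP hP' =>
    simp only [add_mul, map_add, hP, hP', Finset.sum_add_distrib, mul_add]; ring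
  | monomial n a =>
    induction Q using Polynomial.induction_on' with
    | add P Q hP hQ =>
      simp only [mul_add, map_add, hP, hQ, Finset.sum_add_distrib]; ring
    | monomial m b =>
      rw [monomial_mul_monomial]
      simp only [phi_monomial]
      have hn := Nat.div_add_mod n p
      have hlt := Nat.mod_lt n hp
      have hm := Nat.div_add_mod m p
      have hlt' := Nat.mod_lt m hp
      by_cases h : n % p = 0
      · rw [Finset.sum_eq_zero]
        · have h1 : (n + m) % p = m % p := by
            rw [Nat.add_mod, h, zero_add, Nat.mod_mod]
          have h2 : (n + m) / p = n / p + m / p :=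
            Nat.add_div_of_dvd_right (Nat.dvd_of_mod_eq_zero h)
          rw [h1, h2, h, if_pos rfl]
          split_ifs <;> ring
        · intro j hj
          rw [Finset.mem_Ico] at hj
          rw [if_neg (by omega), zero_mul]
      · rw [if_neg h, zero_mul, zero_add, Finset.sum_eq_single (n % p)]
        · rw [if_pos rfl]
          have e : n + m = (n % p + m % p) + p * (n / p + m / p) := by rw [mul_add]; omega
          by_cases h1 : m % p = p - n % p
          · have e' : n + m = p * (n / p + m / p + 1) := by
              rw [mul_add p _ 1, mul_add]; omega
            rw [if_pos h1, if_pos (by rw [e', Nat.mul_mod_right]), e', Nat.mul_div_cancel_left _ hp]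
            ring
          · rw [if_neg h1, if_neg, mul_zero, mul_zero]
            intro h2
            rw [e, Nat.add_mul_mod_self_left] at h2
            obtain ⟨c, hc⟩ := Nat.dvd_of_mod_eq_zero h2
            have : c < 2 := by
              by_contra hcc
              have : p * 2 ≤ p * c := Nat.mul_le_mul_left _ (by omega)
              omega
            interval_cases c <;> omega
        · intro j hj hj'
          rw [if_neg (Ne.symm hj'), zero_mul]
        · intro h'
          exact absurd (Finset.mem_Ico.2 ⟨by omega, hlt⟩) h'

lemma phi_rec [CharP R p] (y : R) (E : R[X]) (hE : X * (1 - X) * derivative E = C y * (X - X ^ p) * E)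
    (j : ℕ) (hj : j + 1 < p) :
    ((j : R) + 1 + y * T) * phi p T (j + 1) E = (j + y) * phi p T j E := by
  have e : X * derivative E - X * (X * derivative E) = y • (X * E) - y • (X ^ p * E) := by
    rw [smul_eq_C_mul, smul_eq_C_mul]; linear_combination hE
  have := congrArg (phi p T (j + 1)) e
  rw [map_sub, map_sub, map_smul, map_smul, phi_X_succ p T j hj (X * derivative E), phi_X_succ p T j hj E,
    phi_deriv, phi_deriv, phi_Xp p T (by omega), smul_eq_mul, smul_eq_mul] at this
  push_cast at this
  linear_combination this

lemma phi_rec0 [CharP R p] (hp : 0 < p) (y : R) (E : R[X])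
    (hE : X * (1 - X) * derivative E = C y * (X - X ^ p) * E) :
    T * (1 - y) * phi p T (p - 1) E = - y * T * phi p T 0 E := by
  have e : X * derivative E - X * (X * derivative E) = y • (X * E) - y • (X ^ p * E) := by
    rw [smul_eq_C_mul, smul_eq_C_mul]; linear_combination hE
  have := congrArg (phi p T 0) e
  rw [map_sub, map_sub, map_smul, map_smul, phi_X_zero p T hp (X * derivative E), phi_X_zero p T hp E,
    phi_deriv, phi_deriv, phi_Xp p T (by omega), smul_eq_mul, smul_eq_mul, Nat.cast_sub hp,
    CharP.cast_eq_zero R p] at this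
  push_cast at this
  linear_combination this

/-- the truncated inverse of `(j+y)(j+yT)`, with `i` the inverse of `j` -/
def GG (y T i : R) : R :=
  i ^ 2 - y * (1 + T) * i ^ 3 + y ^ 2 * (1 + T + T ^ 2) * i ^ 4
    - y ^ 3 * (1 + T + T ^ 2 + T ^ 3) * i ^ 5 + y ^ 4 * (1 + T + T ^ 2 + T ^ 3 + T ^ 4) * i ^ 6

lemma GG_mul (y T i j : R) (hij : j * i = 1) (hy : y ^ 7 = 0) :
    y ^ 2 * ((j + y) * (j + y * T) * GG y T i) = y ^ 2 := by
  obtain ⟨a, ha⟩ : ∃ a, a = i * y := ⟨_, rfl⟩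
  have hya : y = j * a := by rw [ha]; linear_combination (-y) * hij
  have h0 : y ^ 2 * a ^ 5 = 0 := by rw [ha]; linear_combination i ^ 5 * hy
  have hG : GG y T i = i ^ 2 * (1 - a * (1 + T) + a ^ 2 * (1 + T + T ^ 2)
    - a ^ 3 * (1 + T + T ^ 2 + T ^ 3) + a ^ 4 * (1 + T + T ^ 2 + T ^ 3 + T ^ 4)) := by
    rw [GG, ha]; ring
  have hu : (j + y) * (j + y * T) = j ^ 2 * ((1 + a) * (1 + a * T)) := by rw [hya]; ring
  have hj2 : j ^ 2 * i ^ 2 = 1 := by rw [← mul_pow, hij, one_pow]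
  rw [hG, hu]
  linear_combination (y ^ 2 * (1 + a) * (1 + a * T) * (1 - a * (1 + T) + a ^ 2 * (1 + T + T ^ 2)
    - a ^ 3 * (1 + T + T ^ 2 + T ^ 3) + a ^ 4 * (1 + T + T ^ 2 + T ^ 3 + T ^ 4))) * hj2
    + (((1 + T + T ^ 2 + T ^ 3 + T ^ 4) * (1 + T) - T * (1 + T + T ^ 2 + T ^ 3))
      + a * T * (1 + T + T ^ 2 + T ^ 3 + T ^ 4)) * h0

lemma key_prod [CharP R p] (y : R) (hy : y ^ 7 = 0) (inv : ℕ → R)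
    (hinv : ∀ j ∈ Finset.Ico 1 p, (j : R) * inv j = 1)
    (hsum : ∀ k, 2 ≤ k → k ≤ 6 → ∑ j ∈ Finset.Ico 1 p, inv j ^ k = 0) (hp : 1 < p)
    (E E' : R[X]) (hE : X * (1 - X) * derivative E = C y * (X - X ^ p) * E)
    (hE' : X * (1 - X) * derivative E' = C (-y) * (X - X ^ p) * E')
    (hEE : E * E' = 1) : phi p T 0 E * phi p T 0 E' = 1 := by
  set c := phi p T 0 E * phi p T 0 E' with hc
  have hK : ∀ j, j + 1 < p → T * (((j : R) + 1 + y) * ((j : R) + 1 + y * T) *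
      (phi p T (j + 1) E * phi p T (p - (j + 1)) E')) = y ^ 2 * T * c := by
    intro j
    induction j with
    | zero =>
      intro h
      have h1 := phi_rec p T y E hE 0 h
      have h2 := phi_rec0 p T (by omega) (-y) E' hE'
      rw [hc]
      push_cast at *
      rw [zero_add] at *
      linear_combination T * (1 + y) * phi p T (p - 1) E' * h1 + y * phi p T 0 E * h2
    | succ j ih =>
      intro h
      have h3 := ih (by omega)
      have h1 := phi_rec p T y E hE (j + 1) h
      have h2 := phi_rec p T (-y) E' hE' (p - (j + 1 + 1)) (by omega)
      have e : p - (j + 1 + 1) + 1 = p - (j + 1) := by omega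
      rw [e, Nat.cast_sub (by omega), CharP.cast_eq_zero] at h2
      push_cast at *
      linear_combination h3 + T * (j + 1 + 1 + y) * phi p T (p - (j + 1 + 1)) E' * h1
        + T * (j + 1 + y) * phi p T (j + 1) E * h2
  have hmul := phi_mul p T (by omega) E E'
  have h1 : phi p T 0 (1 : R[X]) = 1 := by
    have := phi_monomial p T 0 0 (1 : R)
    simpa using this
  have hh : ∀ j ∈ Finset.Ico 1 p, T * (phi p T j E * phi p T (p - j) E')
      = T * c * (y ^ 2 * GG y T (inv j)) := by
    intro j hj
    have hj' := Finset.mem_Ico.1 hj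
    have hk := hK (j - 1) (by omega)
    rw [Nat.sub_add_cancel hj'.1, Nat.cast_sub hj'.1, Nat.cast_one, sub_add_cancel] at hk
    have hg := GG_mul y T (inv j) j (hinv j hj) hy
    have hju : IsUnit (j : R) := IsUnit.of_mul_eq_one _ (hinv j hj)
    have hn : IsNilpotent y := ⟨7, hy⟩
    have hu1 : IsUnit ((j : R) + y) := hn.isUnit_add_left_of_commute hju (Commute.all _ _)
    have hu2 : IsUnit ((j : R) + y * T) := by
      refine IsNilpotent.isUnit_add_left_of_commute ⟨7, ?_⟩ hju (Commute.all _ _)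
      rw [mul_pow, hy, zero_mul]
    apply (hu1.mul hu2).mul_left_cancel
    linear_combination hk - T * c * hg
  rw [hEE, h1, Finset.mul_sum, Finset.sum_congr rfl hh, ← Finset.mul_sum, ← Finset.mul_sum] at hmul
  have hz : ∑ j ∈ Finset.Ico 1 p, GG y T (inv j) = 0 := by
    simp only [GG, Finset.sum_add_distrib, Finset.sum_sub_distrib, ← Finset.mul_sum]
    rw [hsum 2, hsum 3, hsum 4, hsum 5, hsum 6] <;> norm_num
  rw [hz] at hmul
  linear_combination -hmul

/-- truncated exponential; `w = 1/720` -/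
noncomputable def EE (w y : R) (l : R[X]) : R[X] :=
  1 + y • l + (360 * w * y ^ 2) • l ^ 2 + (120 * w * y ^ 3) • l ^ 3 + (30 * w * y ^ 4) • l ^ 4
    + (6 * w * y ^ 5) • l ^ 5 + (w * y ^ 6) • l ^ 6

lemma EE_eq (w y : R) (l : R[X]) : EE w y l =
  1 + C y * l + (360 * C w * C y ^ 2) * l ^ 2 + (120 * C w * C y ^ 3) * l ^ 3
    + (30 * C w * C y ^ 4) * l ^ 4
    + (6 * C w * C y ^ 5) * l ^ 5 + (C w * C y ^ 6) * l ^ 6 := by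
  simp only [EE, smul_eq_C_mul, C_mul, C_pow, map_ofNat]

lemma EE_deriv (w : R) (hw : 720 * w = 1) (y : R) (hy : y ^ 7 = 0)
    (l : R[X]) (hl : X * (1 - X) * derivative l = X - X ^ p) :
    X * (1 - X) * derivative (EE w y l) = C y * (X - X ^ p) * EE w y l := by
  have hd : derivative (EE w y l) = (C y + 720 * C w * C y ^ 2 * l + 360 * C w * C y ^ 3 * l ^ 2
      + 120 * C w * C y ^ 4 * l ^ 3 + 30 * C w * C y ^ 5 * l ^ 4 + 6 * C w * C y ^ 6 * l ^ 5)
      * derivative l := by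
    simp only [EE, derivative_add, derivative_smul, derivative_pow, derivative_one]
    simp only [smul_eq_C_mul, C_mul, C_pow, map_ofNat, map_natCast]
    push_cast
    ring
  have h : derivative (EE w y l) = C y * derivative l * EE w y l := by
    have hy' : (C y : R[X]) ^ 7 = 0 := by rw [← C_pow, hy, C_0]
    have hw' : (720 * C w : R[X]) = 1 := by rw [← C_1, ← hw, C_mul, map_ofNat]
    rw [hd, EE_eq]
    linear_combination C y ^ 2 * l * derivative l * hw' - C w * l ^ 6 * derivative l * hy'
  rw [h]
  linear_combination C y * EE w y l * hl

lemma EE_mul (w : R) (hw : 720 * w = 1) (y : R) (hy : y ^ 7 = 0)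
    (l : R[X]) : EE w y l * EE w (-y) l = 1 := by
  have hy' : (C y : R[X]) ^ 7 = 0 := by rw [← C_pow, hy, C_0]
  have hw' : (720 * C w : R[X]) = 1 := by rw [← C_1, ← hw, C_mul, map_ofNat]
  rw [EE_eq, EE_eq, C_neg]
  generalize C y = Y at *
  generalize C w = W at *
  linear_combination (Y ^ 2 * l ^ 2 + 180 * W * Y ^ 4 * l ^ 4 + 10 * W * Y ^ 6 * l ^ 6) * hw' +
    (180 * W ^ 2 * l ^ 8 * Y + 24 * W ^ 2 * l ^ 10 * Y ^ 3 + W ^ 2 * l ^ 12 * Y ^ 5) * hy'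

lemma phi_one : phi p T 0 (1 : R[X]) = 1 := by
  have := phi_monomial p T 0 0 (1 : R)
  simpa using this

lemma phi_EE (w y : R) (l : R[X]) : phi p T 0 (EE w y l) =
   1 + y * phi p T 0 l + (360 * w * y ^ 2) * phi p T 0 (l ^ 2)
    + (120 * w * y ^ 3) * phi p T 0 (l ^ 3) + (30 * w * y ^ 4) * phi p T 0 (l ^ 4)
    + (6 * w * y ^ 5) * phi p T 0 (l ^ 5) + (w * y ^ 6) * phi p T 0 (l ^ 6) := by
  simp only [EE, map_add, map_smul, phi_one, smul_eq_mul]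

lemma phi_map {S : Type*} [CommRing S] (f : R →+* S) (j : ℕ) (P : R[X]) :
    phi p (f T) j (P.map f) = f (phi p T j P) := by
  induction P using Polynomial.induction_on' with
  | add P Q hP hQ => rw [Polynomial.map_add, map_add, hP, hQ, map_add, map_add]
  | monomial n a =>
    rw [map_monomial, phi_monomial, phi_monomial]
    split_ifs <;> simp

/-- The key relation `C₆ = 10 C₃²`. -/
lemma key_rel [CharP R p] (inv : ℕ → R)
    (hinv : ∀ j ∈ Finset.Ico 1 p, (j : R) * inv j = 1)
    (hsum : ∀ k, 2 ≤ k → k ≤ 6 → ∑ j ∈ Finset.Ico 1 p, inv j ^ k = 0) (hp : 1 < p)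
    (w : R) (hw : 720 * w = 1)
    (l : R[X]) (hl : X * (1 - X) * derivative l = X - X ^ p) (h1 : phi p T 0 l = 0)
    (h2 : phi p T 0 (l ^ 2) = 0) :
    phi p T 0 (l ^ 6) = 10 * phi p T 0 (l ^ 3) ^ 2 := by
  let I : Ideal R[X] := Ideal.span {X ^ 7}
  let q : R[X] →+* R[X] ⧸ I := Ideal.Quotient.mk I
  let g : R →+* R[X] ⧸ I := q.comp C
  have hg : ∀ a, g a = q (C a) := fun a => rfl
  have hy : (q X) ^ 7 = 0 := by
    rw [← map_pow]
    exact Ideal.Quotient.eq_zero_iff_mem.2 (Ideal.mem_span_singleton_self _)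
  have hq : ∀ P : R[X], q P = 0 → P.coeff 6 = 0 := by
    intro P hP
    have := Ideal.mem_span_singleton.1 (Ideal.Quotient.eq_zero_iff_mem.1 hP)
    exact X_pow_dvd_iff.1 this 6 (by norm_num)
  have ginj : Function.Injective g := by
    rw [injective_iff_map_eq_zero]
    intro a ha
    have := Ideal.mem_span_singleton.1 (Ideal.Quotient.eq_zero_iff_mem.1 ha)
    simpa using X_pow_dvd_iff.1 this 0 (by norm_num)
  have : CharP (R[X] ⧸ I) p := (RingHom.charP_iff g ginj p).1 inferInstance
  have hl' : X * (1 - X) * derivative (l.map g) = X - X ^ p := by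
    have := congrArg (Polynomial.map g) hl
    simpa [derivative_map] using this
  have hw' : 720 * g w = 1 := by
    have := congrArg g hw
    rwa [map_mul, map_ofNat, map_one] at this
  have hy' : (- q X) ^ 7 = 0 := by linear_combination - hy
  have := key_prod p (g T) (q X) hy (fun j => g (inv j))
    (fun j hj => by have := congrArg g (hinv j hj); simpa using this)
    (fun k hk hk' => by have := congrArg g (hsum k hk hk'); simpa using this) hp _ _
    (EE_deriv p (g w) hw' (q X) hy (l.map g) hl') (EE_deriv p (g w) hw' (- q X) hy' (l.map g) hl')
    (EE_mul (g w) hw' (q X) hy (l.map g))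
  rw [phi_EE, phi_EE] at this
  simp only [← Polynomial.map_pow, phi_map] at this
  rw [h1, h2] at this
  generalize phi p T 0 (l ^ 3) = c3 at *
  generalize phi p T 0 (l ^ 4) = c4 at *
  generalize phi p T 0 (l ^ 5) = c5 at *
  generalize phi p T 0 (l ^ 6) = c6 at *
  have h4 : q (C (60 * w * c4) * X ^ 4 + C ((2 * w) * (c6 - 10 * c3 ^ 2)) * X ^ 6) = 0 := by
    simp only [map_add, map_mul, map_sub, map_pow, map_ofNat, ← hg]
    rw [map_zero] at this
    have hs : g c3 = g c3 := rfl
    generalize q X = Y at *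
    generalize g w = W at *
    generalize g c3 = C3 at *
    generalize g c4 = C4 at *
    generalize g c5 = C5 at *
    generalize g c6 = C6 at *
    linear_combination this + (20 * W * Y ^ 6 * C3 ^ 2) * hw' + (-(60 * W ^ 2 * C4 * C6 * Y ^ 3) - 900 * W ^ 2 * C4 ^ 2 * Y
      + 1440 * W ^ 2 * C3 * C5 * Y + 36 * W ^ 2 * C5 ^ 2 * Y ^ 3 - W ^ 2 * C6 ^ 2 * Y ^ 5) * hy
  have h5 := hq _ h4
  rw [coeff_add, coeff_C_mul, coeff_C_mul, coeff_X_pow, coeff_X_pow, if_neg (by norm_num),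
    if_pos rfl, mul_zero, zero_add, mul_one] at h5
  have h6 : 360 * (2 * w * (c6 - 10 * c3 ^ 2)) = 0 := by rw [h5, mul_zero]
  linear_combination h6 - (c6 - 10 * c3 ^ 2) * hw
end phi

section zmod
open Polynomial
variable (p : ℕ) [Fact p.Prime]

/-- `q` reduces to `a` mod `p` -/
def Red (q : ℚ) (a : ZMod p) : Prop :=
  ∃ (n : ℤ) (d : ℕ), (d : ZMod p) ≠ 0 ∧ q = n / d ∧ a = n / d

variable {p}

lemma Red.int (n : ℤ) : Red p n n := ⟨n, 1, by simp, by simp, by simp⟩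
lemma Red.nat (n : ℕ) : Red p n n := ⟨n, 1, by simp, by simp, by simp⟩

lemma ratne {d : ℕ} (h : (d : ZMod p) ≠ 0) : (d : ℚ) ≠ 0 := by
  rintro h0
  have : d = 0 := by exact_mod_cast h0
  simp [this] at h

lemma Red.add {q r : ℚ} {a b : ZMod p} (h : Red p q a) (h' : Red p r b) : Red p (q + r) (a + b) := by
  obtain ⟨n, d, hd, rfl, rfl⟩ := h
  obtain ⟨n', d', hd', rfl, rfl⟩ := h'
  have := ratne hd
  have := ratne hd'
  refine ⟨n * d' + n' * d, d * d', by push_cast; exact mul_ne_zero hd hd', ?_, ?_⟩ <;>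
  · push_cast; field_simp

lemma Red.mul {q r : ℚ} {a b : ZMod p} (h : Red p q a) (h' : Red p r b) : Red p (q * r) (a * b) := by
  obtain ⟨n, d, hd, rfl, rfl⟩ := h
  obtain ⟨n', d', hd', rfl, rfl⟩ := h'
  have := ratne hd
  have := ratne hd'
  refine ⟨n * n', d * d', by push_cast; exact mul_ne_zero hd hd', ?_, ?_⟩ <;>
  · push_cast; field_simp

lemma Red.neg {q : ℚ} {a : ZMod p} (h : Red p q a) : Red p (-q) (-a) := by
  obtain ⟨n, d, hd, rfl, rfl⟩ := h
  refine ⟨-n, d, hd, ?_, ?_⟩ <;>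
  · push_cast; ring

lemma Red.sub {q r : ℚ} {a b : ZMod p} (h : Red p q a) (h' : Red p r b) : Red p (q - r) (a - b) := by
  rw [sub_eq_add_neg, sub_eq_add_neg]; exact h.add h'.neg

lemma Red.inv_nat {n : ℕ} (h : (n : ZMod p) ≠ 0) : Red p (1 / n) (n : ZMod p)⁻¹ :=
  ⟨1, n, h, by simp, by simp⟩

lemma Red.pow {q : ℚ} {a : ZMod p} (h : Red p q a) (n : ℕ) : Red p (q ^ n) (a ^ n) := by
  induction n with
  | zero => simpa using Red.nat (p := p) 1
  | succ n ih => rw [pow_succ, pow_succ]; exact ih.mul h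

lemma Red.sum {ι : Type*} (s : Finset ι) (f : ι → ℚ) (g : ι → ZMod p)
    (h : ∀ i ∈ s, Red p (f i) (g i)) : Red p (∑ i ∈ s, f i) (∑ i ∈ s, g i) := by
  classical
  induction s using Finset.induction_on with
  | empty => simpa using Red.nat (p := p) 0
  | insert a s ha ih =>
    rw [Finset.sum_insert ha, Finset.sum_insert ha]
    exact (h a (by simp)).add (ih fun i hi => h i (by simp [hi]))

lemma Red.prod {ι : Type*} (s : Finset ι) (f : ι → ℚ) (g : ι → ZMod p)
    (h : ∀ i ∈ s, Red p (f i) (g i)) : Red p (∏ i ∈ s, f i) (∏ i ∈ s, g i) := by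
  classical
  induction s using Finset.induction_on with
  | empty => simpa using Red.nat (p := p) 1
  | insert a s ha ih =>
    rw [Finset.prod_insert ha, Finset.prod_insert ha]
    exact (h a (by simp)).mul (ih fun i hi => h i (by simp [hi]))

lemma Red.unique {q : ℚ} {a b : ZMod p} (h : Red p q a) (h' : Red p q b) : a = b := by
  obtain ⟨n, d, hd, e, e'⟩ := h.sub h'
  have := ratne hd
  rw [sub_self, eq_comm, div_eq_zero_iff, or_iff_left this] at e
  have : n = 0 := by exact_mod_cast e
  rw [this] at e'
  simpa [sub_eq_zero] using e'

lemma Red.ratCong {q r : ℚ} {a : ZMod p} (h : Red p q a) (h' : Red p r a) : ratCong p 1 q r := by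
  obtain ⟨n, d, hd, e, e'⟩ := h.sub h'
  rw [sub_self, eq_comm, div_eq_zero_iff, or_iff_left hd, ZMod.intCast_zmod_eq_zero_iff_dvd] at e'
  obtain ⟨m, rfl⟩ := e'
  refine ⟨(m : ℚ) / ((d : ℤ) : ℚ), ?_, ?_⟩
  · rw [e]; push_cast; ring
  · intro hdvd
    have h1 : (((m : ℚ) / ((d : ℤ) : ℚ)).den : ℤ) ∣ (d : ℤ) := by
      rw [← Rat.divInt_eq_div]; exact Rat.den_dvd m d
    have h2 : p ∣ d := hdvd.trans (by exact_mod_cast h1)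
    exact hd ((ZMod.natCast_eq_zero_iff d p).2 h2)

lemma cast_ne {j : ℕ} (h : 1 ≤ j) (h' : j < p) : (j : ZMod p) ≠ 0 := by
  intro h0
  have := Nat.le_of_dvd h ((ZMod.natCast_eq_zero_iff j p).1 h0)
  omega

lemma Red.bernoulli (k : ℕ) : k < p - 1 → ∃ a, Red p (bernoulli k) a := by
  induction k using Nat.strong_induction_on with
  | _ k ih =>
    intro hk
    choose! β hβ using ih
    have hs := _root_.sum_bernoulli (k + 1)
    rw [Finset.sum_range_succ, Nat.choose_succ_self_right] at hs
    have hk1 : (((k + 1 : ℕ) : ℚ)) ≠ 0 := by positivity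
    have : _root_.bernoulli k = ((if k + 1 = 1 then (1 : ℕ) else (0 : ℕ) : ℕ) -
      ∑ i ∈ Finset.range k, (((k + 1).choose i : ℕ) : ℚ) * _root_.bernoulli i) * (1 / (k + 1 : ℕ)) := by
      rw [mul_one_div, eq_div_iff hk1]
      split_ifs at hs ⊢ <;> push_cast at * <;> linear_combination hs
    rw [this]
    exact ⟨_, ((Red.nat _).sub (Red.sum _ _ (fun i => (((k + 1).choose i : ℕ) : ZMod p) * β i)
      fun i hi => (Red.nat _).mul (hβ i (Finset.mem_range.1 hi) (by
        have := Finset.mem_range.1 hi; omega)))).mul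
      (Red.inv_nat (cast_ne (by omega) (by omega)))⟩

lemma sum_range_zmod {M : Type*} [AddCommMonoid M] (f : ZMod p → M) :
    ∑ j ∈ Finset.range p, f j = ∑ x, f x := by
  refine Finset.sum_bij' (fun j _ => (j : ZMod p)) (fun x _ => x.val) (by simp) ?_ ?_ (by simp) (by simp)
  · intro x _; simpa using ZMod.val_lt x
  · intro j hj; simpa using ZMod.val_cast_of_lt (Finset.mem_range.1 hj)

lemma range_eq (f : ZMod p → ZMod p) (h0 : f 0 = 0) :
    ∑ j ∈ Finset.range p, f j = ∑ j ∈ Finset.Ico 1 p, f j := by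
  rw [Finset.range_eq_Ico, Finset.sum_eq_sum_Ico_succ_bot (Fact.out : p.Prime).pos]
  simp [h0]

lemma psum (k : ℕ) (h1 : 1 ≤ k) (h2 : k < p - 1) : ∑ j ∈ Finset.Ico 1 p, (j : ZMod p) ^ k = 0 := by
  rw [← range_eq (fun x => x ^ k) (by simp; omega), sum_range_zmod (fun x : ZMod p => x ^ k)]
  exact FiniteField.sum_pow_lt_card_sub_one _ _ (by rwa [ZMod.card])

lemma psum_inv (k : ℕ) (h1 : 1 ≤ k) (h2 : k < p - 1) :
    ∑ j ∈ Finset.Ico 1 p, ((j : ZMod p)⁻¹) ^ k = 0 := by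
  rw [← range_eq (fun x => x⁻¹ ^ k) (by simp; omega), sum_range_zmod (fun x : ZMod p => x⁻¹ ^ k),
    ← FiniteField.sum_pow_lt_card_sub_one (ZMod p) k (by rwa [ZMod.card])]
  exact Function.Bijective.sum_comp (inv_involutive (G := ZMod p)).bijective (fun x => x ^ k)

variable (p) in
noncomputable def LL : (ZMod p)[X] := ∑ l ∈ Finset.Ico 1 p, monomial l ((l : ZMod p)⁻¹)

lemma coeff_LL (n : ℕ) : (LL p).coeff n = if n < p then (n : ZMod p)⁻¹ else 0 := by
  simp only [LL, finsetSum_coeff, coeff_monomial, Finset.sum_ite_eq', Finset.mem_Ico]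
  rcases Nat.eq_zero_or_pos n with rfl | h
  · simp
  · simp [Nat.one_le_iff_ne_zero, h.ne']

lemma LL_deriv' : X * derivative (LL p) = ∑ l ∈ Finset.Ico 1 p, X ^ l := by
  rw [LL, derivative_sum, Finset.mul_sum]
  refine Finset.sum_congr rfl fun l hl => ?_
  have hl := Finset.mem_Ico.1 hl
  rw [derivative_monomial, X_mul_monomial, Nat.sub_add_cancel hl.1,
    inv_mul_cancel₀ (cast_ne hl.1 hl.2), monomial_one_right_eq_X_pow]

lemma LL_deriv : X * (1 - X) * derivative (LL p) = X - X ^ p := by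
  have : X * (1 - X) * derivative (LL p) = (∑ l ∈ Finset.Ico 1 p, X ^ l) * (1 - X) := by
    rw [← LL_deriv']; ring
  rw [this]
  have h := geom_sum_Ico_mul_neg (X : (ZMod p)[X]) (Fact.out : p.Prime).one_le
  rw [h, pow_one]

lemma red_hsum (n N : ℕ) : Red p (hsumLt p n N) ((LL p ^ n).coeff N) := by
  have : (LL p ^ n).coeff N = ∑ l ∈ (Fintype.piFinset fun _ : Fin n => Finset.Ico 1 p).filter
      (fun l => ∑ i, l i = N), ∏ i, ((l i : ZMod p))⁻¹ := by
    have h : LL p ^ n = ∏ _i : Fin n, LL p := by simp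
    rw [h]
    simp only [LL]
    rw [Finset.prod_univ_sum, finsetSum_coeff, Finset.sum_filter]
    refine Finset.sum_congr rfl fun l _ => ?_
    have : ∏ i, monomial (l i) ((l i : ZMod p)⁻¹) = monomial (∑ i, l i) (∏ i, (l i : ZMod p)⁻¹) := by
      simp only [← C_mul_X_pow_eq_monomial]
      rw [Finset.prod_mul_distrib, Finset.prod_pow_eq_pow_sum, map_prod]
    rw [this, coeff_monomial]
  rw [this, hsumLt]
  refine Red.sum _ _ _ fun l hl => Red.prod _ _ _ fun i _ => Red.inv_nat ?_
  have := Finset.mem_Ico.1 (Fintype.mem_piFinset.1 (Finset.mem_filter.1 hl).1 i)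
  exact cast_ne this.1 this.2

lemma natDegree_LL : (LL p).natDegree ≤ p - 1 := by
  refine natDegree_sum_le_of_forall_le _ _ fun l hl => (natDegree_monomial_le _).trans ?_
  have := Finset.mem_Ico.1 hl
  omega

lemma coeff_high (k m : ℕ) (h : k ≤ m) (hk : 1 ≤ k) : (LL p ^ k).coeff (p * m) = 0 := by
  apply coeff_eq_zero_of_natDegree_lt
  have hp := (Fact.out : p.Prime).pos
  calc _ ≤ k * (p - 1) := natDegree_pow_le_of_le _ natDegree_LL
    _ < k * p := Nat.mul_lt_mul_of_pos_left (by omega) (by omega)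
    _ = p * k := mul_comm _ _
    _ ≤ p * m := Nat.mul_le_mul_left _ h

lemma coeff_low (k : ℕ) (hk : 1 ≤ k) : (LL p ^ k).coeff 0 = 0 := by
  rw [coeff_zero_eq_eval_zero, eval_pow, ← coeff_zero_eq_eval_zero, coeff_LL]
  simp; omega

lemma coeff_LL_sub (s : ℕ) (hs : s ≤ p) : (LL p).coeff (p - s) = if s < p then - (s : ZMod p)⁻¹ else 0 := by
  rw [coeff_LL, Nat.cast_sub hs, CharP.cast_eq_zero, zero_sub, inv_neg]
  have hp := (Fact.out : p.Prime).pos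
  rcases Nat.eq_zero_or_pos s with rfl | h
  · simp
  · rcases hs.eq_or_lt with rfl | h'
    · simp
    · rw [if_pos (by omega), if_pos h']

lemma coeff_two (hp : 3 < p) : (LL p ^ 2).coeff p = 0 := by
  rw [pow_two, coeff_mul, Finset.Nat.sum_antidiagonal_eq_sum_range_succ_mk, Finset.sum_range_succ,
    coeff_LL_sub p le_rfl, if_neg (lt_irrefl _), mul_zero, add_zero]
  have : ∀ s ∈ Finset.range p, (LL p).coeff s * (LL p).coeff (p - s) = - ((s : ZMod p)⁻¹ ^ 2) := by
    intro s hs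
    have hs := Finset.mem_range.1 hs
    rw [coeff_LL_sub s hs.le, coeff_LL, if_pos hs, if_pos hs]; ring
  rw [Finset.sum_congr rfl this, Finset.sum_neg_distrib,
    range_eq (fun x => x⁻¹ ^ 2) (by simp), psum_inv 2 (by norm_num) (by omega), neg_zero]

lemma coeff_sq (s : ℕ) (hs : s < p) :
    s * (LL p ^ 2).coeff s = 2 * ∑ i ∈ Finset.range s, (i : ZMod p)⁻¹ := by
  have h : X * derivative (LL p ^ 2) = 2 * (LL p * ∑ l ∈ Finset.Ico 1 p, X ^ l) := by
    rw [← LL_deriv', derivative_pow]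
    push_cast
    ring_nf
    rw [map_ofNat]
    ring
  have h1 : (X * derivative (LL p ^ 2)).coeff s = s * (LL p ^ 2).coeff s := by
    cases s with
    | zero => simp
    | succ s => rw [coeff_X_mul, coeff_derivative]; push_cast; ring
  rw [← h1, h, ← map_ofNat (C : ZMod p →+* _), coeff_C_mul, coeff_mul,
    Finset.Nat.sum_antidiagonal_eq_sum_range_succ_mk, Finset.sum_range_succ]
  congr 1
  have hU : ∀ n, (∑ l ∈ Finset.Ico 1 p, X ^ l : (ZMod p)[X]).coeff n =
      if n ∈ Finset.Ico 1 p then 1 else 0 := by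
    intro n
    simp only [finsetSum_coeff, coeff_X_pow, Finset.sum_ite_eq]
  simp only [hU]
  rw [if_neg (by simp), mul_zero, add_zero]
  refine Finset.sum_congr rfl fun i hi => ?_
  have hi := Finset.mem_range.1 hi
  rw [coeff_LL, if_pos (by omega), if_pos (Finset.mem_Ico.2 (by omega)), mul_one]

lemma coeff_cube : (LL p ^ 3).coeff p =
    - (2 * ∑ s ∈ Finset.range p, (s : ZMod p)⁻¹ ^ 2 * ∑ i ∈ Finset.range s, (i : ZMod p)⁻¹) := by
  rw [pow_succ, coeff_mul, Finset.Nat.sum_antidiagonal_eq_sum_range_succ_mk, Finset.sum_range_succ,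
    coeff_LL_sub p le_rfl, if_neg (lt_irrefl _), mul_zero, add_zero, Finset.mul_sum,
    ← Finset.sum_neg_distrib]
  refine Finset.sum_congr rfl fun s hs => ?_
  have hs := Finset.mem_range.1 hs
  rw [coeff_LL_sub s hs.le, if_pos hs]
  rcases Nat.eq_zero_or_pos s with rfl | h
  · simp
  · have := coeff_sq s hs
    have h0 := cast_ne h hs
    generalize ∑ i ∈ Finset.range s, (i : ZMod p)⁻¹ = H at *
    field_simp
    linear_combination -this

lemma bern_sum (hp : 11 ≤ p) (b : ZMod p) (hb : Red p (bernoulli (p - 3)) b) :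
    ∑ s ∈ Finset.range p, (s : ZMod p)⁻¹ ^ 2 * ∑ i ∈ Finset.range s, (i : ZMod p)⁻¹ = b := by
  have hB := fun k => Red.bernoulli (p := p) k
  choose! β hβ using hB
  have hinv : ∀ x : ZMod p, x⁻¹ = x ^ (p - 2) := by
    intro x
    by_cases hx : x = 0
    · rw [hx, inv_zero, zero_pow (by omega)]
    · refine inv_eq_of_mul_eq_one_right ?_
      rw [← pow_succ', show p - 2 + 1 = p - 1 by omega, ZMod.pow_card_sub_one_eq_one hx]
  have hpc : ((p - 2 : ℕ) : ZMod p) + 1 = -1 := by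
    rw [Nat.cast_sub (by omega), CharP.cast_eq_zero]; push_cast; ring
  have hF : ∀ s : ℕ, ∑ i ∈ Finset.range s, (i : ZMod p)⁻¹ =
      ∑ k ∈ Finset.range (p - 1), - (β k * ((p - 1).choose k : ZMod p) * (s : ZMod p) ^ (p - 1 - k)) := by
    intro s
    have h1 := sum_range_pow s (p - 2)
    have h2 : Red p (∑ i ∈ Finset.range s, (i : ℚ) ^ (p - 2))
        (∑ i ∈ Finset.range s, (i : ZMod p) ^ (p - 2)) :=
      Red.sum _ _ _ fun i _ => (Red.nat i).pow _
    rw [h1] at h2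
    have e : p - 2 + 1 = p - 1 := by omega
    rw [e] at h2
    have hc : Red p (1 / ((p - 2 : ℕ) + 1 : ℚ)) (-1) := by
      have := Red.inv_nat (cast_ne (p := p) (show 1 ≤ p - 2 + 1 by omega) (by omega))
      push_cast at this
      rw [hpc] at this
      simpa [inv_neg] using this
    have h3 : Red p (∑ i ∈ Finset.range (p - 1), _root_.bernoulli i * ((p - 1).choose i : ℚ)
        * (s : ℚ) ^ (p - 1 - i) / (((p - 2 : ℕ) : ℚ) + 1)) (∑ k ∈ Finset.range (p - 1),
        (β k * ((p - 1).choose k : ZMod p) * (s : ZMod p) ^ (p - 1 - k)) * (-1)) := by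
      refine Red.sum _ _ _ fun i hi => ?_
      rw [div_eq_mul_one_div]
      exact (((hβ i (Finset.mem_range.1 hi)).mul (Red.nat _)).mul ((Red.nat _).pow _)).mul hc
    have := h2.unique h3
    simp only [hinv, this, mul_neg_one]
  have hS : ∑ s ∈ Finset.range p, (s : ZMod p)⁻¹ ^ 2 * ∑ i ∈ Finset.range s, (i : ZMod p)⁻¹
     = ∑ k ∈ Finset.range (p - 1), - (β k * ((p - 1).choose k : ZMod p)) *
      ∑ s ∈ Finset.Ico 1 p, (s : ZMod p)⁻¹ ^ 2 * (s : ZMod p) ^ (p - 1 - k) := by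
    simp only [hF, Finset.mul_sum]
    rw [Finset.sum_comm]
    refine Finset.sum_congr rfl fun k hk => ?_
    have hk := Finset.mem_range.1 hk
    rw [range_eq (fun x => x⁻¹ ^ 2 * -(β k * ((p - 1).choose k : ZMod p) * x ^ (p - 1 - k)))
      (by simp)]
    refine Finset.sum_congr rfl fun s _ => ?_
    ring
  have hmod : ∀ k, k ≤ p - 3 → ∑ s ∈ Finset.Ico 1 p, (s : ZMod p)⁻¹ ^ 2 * (s : ZMod p) ^ (p - 1 - k) =
      ∑ s ∈ Finset.Ico 1 p, (s : ZMod p) ^ (p - 3 - k) := by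
    intro k hk
    refine Finset.sum_congr rfl fun s hs => ?_
    have hs := Finset.mem_Ico.1 hs
    have h0 := cast_ne hs.1 hs.2
    have e : p - 1 - k = 2 + (p - 3 - k) := by omega
    rw [e, pow_add, ← mul_assoc, ← mul_pow, inv_mul_cancel₀ h0, one_pow, one_mul]
  rw [hS, Finset.sum_eq_single (p - 3)]
  · rw [hmod _ le_rfl, Nat.sub_self]
    simp only [pow_zero, Finset.sum_const, Nat.card_Ico, nsmul_eq_mul, mul_one]
    have hch : ((p - 1).choose (p - 3) : ZMod p) = 1 := by
      have e : (p - 1).choose (p - 3) = (p - 1).choose 2 := by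
        rw [← Nat.choose_symm (show 2 ≤ p - 1 by omega)]; congr 1
      have h2 : (p - 1).choose 2 * 2 = (p - 1) * (p - 2) := by
        rw [Nat.choose_two_right]
        exact Nat.div_mul_cancel (even_iff_two_dvd.1 (Nat.even_mul_pred_self (p - 1)))
      have h3 := congrArg (Nat.cast : ℕ → ZMod p) h2
      push_cast [Nat.cast_sub (show 1 ≤ p by omega), Nat.cast_sub (show 2 ≤ p by omega)] at h3
      rw [CharP.cast_eq_zero (ZMod p) p] at h3
      have h4 : ((2 : ℕ) : ZMod p) ≠ 0 := cast_ne (by norm_num) (by omega)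
      rw [e]
      apply mul_right_cancel₀ h4
      push_cast
      linear_combination h3
    rw [hch, (hβ (p - 3) (by omega)).unique hb, Nat.cast_sub (by omega), CharP.cast_eq_zero]
    push_cast; ring
  · intro k hk hk'
    have hk := Finset.mem_range.1 hk
    by_cases h : k ≤ p - 3
    · rw [hmod k h, psum _ (by omega) (by omega), mul_zero]
    · have e : p - 1 - k = 1 := by omega
      rw [e]
      have : ∑ s ∈ Finset.Ico 1 p, (s : ZMod p)⁻¹ ^ 2 * (s : ZMod p) ^ 1 = 0 := by
        rw [← psum_inv (p := p) 1 le_rfl (by omega)]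
        refine Finset.sum_congr rfl fun s hs => ?_
        have hs := Finset.mem_Ico.1 hs
        have h0 := cast_ne hs.1 hs.2
        field_simp
      rw [this, mul_zero]
  · intro h
    exact absurd (Finset.mem_range.2 (by omega)) h

lemma reflect_LL : reflect p (LL p) = - LL p := by
  ext n
  rw [coeff_reflect, coeff_neg]
  rcases le_or_gt n p with h | h
  · rw [revAt_le h, coeff_LL_sub n h, coeff_LL]
    split_ifs <;> simp
  · rw [revAt_eq_self_of_lt h, coeff_LL, if_neg (by omega), neg_zero]

lemma coeff_cube_symm : (LL p ^ 3).coeff (p * 2) = - (LL p ^ 3).coeff p := by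
  have hd : (LL p).natDegree ≤ p := natDegree_LL.trans (Nat.sub_le _ _)
  have h : reflect (p + p + p) (LL p * LL p * LL p) = - (LL p ^ 3) := by
    rw [reflect_mul _ _ ((natDegree_mul_le).trans (add_le_add hd hd)) hd, reflect_mul _ _ hd hd,
      reflect_LL]
    ring
  have h1 := congrArg (fun P => coeff P p) h
  simp only [coeff_reflect, coeff_neg] at h1
  rw [revAt_le (by omega)] at h1
  have e : p + p + p - p = p * 2 := by omega
  rw [e] at h1
  rw [← h1]
  congr 1
  ring

lemma coeff_phi (P : (ZMod p)[X]) (m : ℕ) :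
    (phi p (X : (ZMod p)[X]) 0 (P.map C)).coeff m = P.coeff (p * m) := by
  have hp := (Fact.out : p.Prime).pos
  induction P using Polynomial.induction_on' with
  | add P Q hP hQ => rw [Polynomial.map_add, map_add, coeff_add, hP, hQ, coeff_add]
  | monomial n a =>
    rw [map_monomial, phi_monomial, coeff_monomial]
    by_cases h : n = p * m
    · rw [if_pos h, h, if_pos (Nat.mul_mod_right _ _), Nat.mul_div_cancel_left _ hp, coeff_mul_C]
      simp
    · rw [if_neg h]
      split_ifs with h1
      · rw [coeff_mul_C, coeff_X_pow, if_neg, zero_mul]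
        rintro rfl
        exact h (Nat.mul_div_cancel' (Nat.dvd_of_mod_eq_zero h1)).symm
      · simp

lemma main_rel (hp : 11 ≤ p) (b : ZMod p) (hb : Red p (bernoulli (p - 3)) b) :
    phi p (X : (ZMod p)[X]) 0 ((LL p ^ 6).map C) = C (40 * b ^ 2) * (X ^ 2 - 2 * X ^ 3 + X ^ 4) := by
  have hc : (LL p ^ 3).coeff p = -(2 * b) := by rw [coeff_cube, bern_sum hp b hb]
  have h3 : phi p (X : (ZMod p)[X]) 0 ((LL p ^ 3).map C) = C (-(2 * b)) * (X - X ^ 2) := by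
    ext m
    rw [coeff_phi, coeff_C_mul, coeff_sub, coeff_X, coeff_X_pow]
    rcases Nat.lt_or_ge m 3 with h | h
    · interval_cases m
      · simpa using coeff_low 3 (by norm_num)
      · simpa using hc
      · rw [coeff_cube_symm, hc]; simp
    · rw [coeff_high 3 m h (by norm_num), if_neg (by omega), if_neg (by omega)]; simp
  have h2 : phi p (X : (ZMod p)[X]) 0 ((LL p ^ 2).map C) = 0 := by
    ext m
    rw [coeff_phi, coeff_zero]
    rcases Nat.lt_or_ge m 2 with h | h
    · interval_cases m
      · simpa using coeff_low 2 (by norm_num)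
      · simpa using coeff_two (by omega)
    · exact coeff_high 2 m h (by norm_num)
  have h1 : phi p (X : (ZMod p)[X]) 0 ((LL p).map C) = 0 := by
    ext m
    rw [coeff_phi, coeff_zero, ← pow_one (LL p)]
    rcases Nat.lt_or_ge m 1 with h | h
    · interval_cases m
      simpa using coeff_low 1 (by norm_num)
    · exact coeff_high 1 m h (by norm_num)
  have h720 : (720 : ZMod p) ≠ 0 := by
    have h5 : ((5 : ℕ) : ZMod p) ≠ 0 := cast_ne (by norm_num) (by omega)
    have h3 : ((3 : ℕ) : ZMod p) ≠ 0 := cast_ne (by norm_num) (by omega)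
    have h2 : ((2 : ℕ) : ZMod p) ≠ 0 := cast_ne (by norm_num) (by omega)
    have : (720 : ZMod p) = ((2 : ℕ) : ZMod p) ^ 4 * ((3 : ℕ) : ZMod p) ^ 2 * ((5 : ℕ) : ZMod p) := by
      push_cast; norm_num
    rw [this]
    exact mul_ne_zero (mul_ne_zero (pow_ne_zero _ h2) (pow_ne_zero _ h3)) h5
  have := key_rel p (X : (ZMod p)[X]) (fun j => C ((j : ZMod p)⁻¹))
    (fun j hj => by
      have := Finset.mem_Ico.1 hj
      rw [← map_natCast (C : ZMod p →+* _), ← C_mul, mul_inv_cancel₀ (cast_ne this.1 this.2), C_1])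
    (fun k hk hk' => by
      simp only [← C_pow]
      rw [← map_sum, psum_inv k (by omega) (by omega), C_0])
    (by omega) (C (720 : ZMod p)⁻¹)
    (by rw [← map_ofNat (C : ZMod p →+* _), ← C_mul, mul_inv_cancel₀ h720, C_1])
    ((LL p).map C)
    (by
      have := congrArg (Polynomial.map (C : ZMod p →+* _)) (LL_deriv (p := p))
      simpa [derivative_map] using this)
    h1 (by rw [← Polynomial.map_pow, h2])
  rw [← Polynomial.map_pow, ← Polynomial.map_pow, h3] at this
  rw [this]
  simp only [C_mul, C_neg, C_pow, map_ofNat]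
  ring

end zmod

theorem stmt_16 (p : ℕ) (hp : p.Prime) (hp11 : 11 ≤ p) :
    ratCong p 1 (hsumLt p 6 (2 * p)) (40 * bernoulli (p - 3) ^ 2) ∧
    ratCong p 1 (hsumLt p 6 (3 * p)) (-80 * bernoulli (p - 3) ^ 2) := by
  have : Fact p.Prime := ⟨hp⟩
  obtain ⟨b, hb⟩ := Red.bernoulli (p := p) (p - 3) (by omega)
  have h := main_rel hp11 b hb
  have h2 : (LL p ^ 6).coeff (2 * p) = 40 * b ^ 2 := by
    rw [mul_comm 2 p, ← coeff_phi, h, Polynomial.coeff_C_mul]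
    simp [Polynomial.coeff_X_pow, Polynomial.coeff_ofNat_mul]
  have h3 : (LL p ^ 6).coeff (3 * p) = -80 * b ^ 2 := by
    rw [mul_comm 3 p, ← coeff_phi, h, Polynomial.coeff_C_mul]
    simp [Polynomial.coeff_X_pow, Polynomial.coeff_ofNat_mul]
    ring
  constructor
  · refine (red_hsum 6 (2 * p)).ratCong ?_
    rw [h2]
    exact_mod_cast (Red.int (p := p) 40).mul (hb.pow 2)
  · refine (red_hsum 6 (3 * p)).ratCong ?_
    rw [h3]
    exact_mod_cast (Red.int (p := p) (-80)).mul (hb.pow 2)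
end

section
/- Let p ≥ 11 be a prime. Define S_6^{(m)}(p²) as the sum of 1/(l_1⋯l_6) over 6-tuples of positive integers with l_1+⋯+l_6 = m·p², each l_i < p² and coprime to p. Then S_6^{(1)}(p²) ≡ -(20/3)·p·B_{p-3}² (mod p²), S_6^{(2)}(p²) ≡ (80/3)·p·B_{p-3}² (mod p²), and S_6^{(3)}(p²) ≡ -40·p·B_{p-3}² (mod p²). -/
/-- `S₆^{(m)}(B)`: sum of `1/(l₁⋯l₆)` over positive 6-tuples summing to `N`,
with each `lᵢ < B` and coprime to `p`. -/
def S6 (p B N : ℕ) : ℚ :=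
  ∑ l ∈ (Fintype.piFinset fun _ : Fin 6 => Finset.Ico 1 B) |>.filter
      (fun l => ∑ i, l i = N ∧ ∀ i, ¬ p ∣ l i),
    ∏ i, (1 : ℚ) / l i

namespace S17
open Finset

section field
variable {K : Type*} [Field K]

/-- Elementary symmetric functions of `1/i`, `i < n`. -/
def es (K : Type*) [Field K] : ℕ → ℕ → K
  | 0, _ => 1
  | k + 1, n => ∑ j ∈ range n, es K k j / j

/-- The logarithm series. -/
noncomputable def Fs (K : Type*) [Field K] : PowerSeries K := PowerSeries.mk fun n => 1 / (n : K)

lemma coeff_Fs (n : ℕ) : PowerSeries.coeff n (Fs K) = 1 / (n : K) := by simp [Fs]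

lemma deriv_Fs [CharZero K] : PowerSeries.derivative K (Fs K) = PowerSeries.mk 1 := by
  ext n
  rw [PowerSeries.coeff_derivative, coeff_Fs, PowerSeries.coeff_mk]
  have : (n : K) + 1 ≠ 0 := by exact_mod_cast Nat.succ_ne_zero n
  push_cast
  simp [this]

lemma coeff_mul_geom (G : PowerSeries K) (n : ℕ) :
    PowerSeries.coeff n (G * PowerSeries.mk 1) = ∑ j ∈ range (n + 1), PowerSeries.coeff j G := by
  rw [PowerSeries.coeff_mul, Finset.Nat.sum_antidiagonal_eq_sum_range_succ_mk]
  simp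

lemma coeff_Fs_pow [CharZero K] (k n : ℕ) :
    PowerSeries.coeff n (Fs K ^ (k + 1)) = ((k + 1).factorial : K) / n * es K k n := by
  induction k generalizing n with
  | zero => simp [coeff_Fs, es]
  | succ k ih =>
    cases n with
    | zero =>
      simp [Fs]
    | succ n =>
      have h := congrArg (PowerSeries.coeff n)
        (Derivation.leibniz_pow (PowerSeries.derivative K) (Fs K) (k + 2))
      rw [deriv_Fs, PowerSeries.coeff_derivative] at h
      simp only [Nat.add_one_sub_one, smul_eq_mul, nsmul_eq_mul] at h
      rw [show ((k + 2 : ℕ) : PowerSeries K) = PowerSeries.C ((k + 2 : ℕ) : K) from (map_natCast PowerSeries.C _).symm,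
        PowerSeries.coeff_C_mul, coeff_mul_geom] at h
      have hn : ((n + 1 : ℕ) : K) ≠ 0 := by exact_mod_cast Nat.succ_ne_zero n
      rw [div_mul_eq_mul_div, eq_div_iff hn]
      push_cast at h ⊢
      rw [h]
      simp only [es, ih]
      rw [Nat.factorial_succ (k + 1), Finset.mul_sum, Finset.mul_sum]
      refine Finset.sum_congr rfl fun j _ => ?_
      push_cast
      ring

open Polynomial in
/-- `∏ (1 + X / i)`. -/
noncomputable def Pp (K : Type*) [Field K] (n : ℕ) : K[X] :=
  ∏ i ∈ range n, (1 + C (1 / (i : K)) * X)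

open Polynomial in
lemma coeff_Pp (k n : ℕ) : (Pp K n).coeff k = es K k n := by
  induction n generalizing k with
  | zero =>
    cases k with
    | zero => simp [Pp, es]
    | succ k => simp [Pp, es, coeff_one]
  | succ n ih =>
    have : Pp K (n + 1) = Pp K n + C (1 / (n : K)) * (Pp K n * X) := by
      simp only [Pp, Finset.prod_range_succ]; ring
    rw [this, coeff_add, coeff_C_mul, ih]
    cases k with
    | zero => simp [es]
    | succ k =>
      rw [coeff_mul_X, ih]
      simp only [es, Finset.sum_range_succ]
      ring

end field
end S17

namespace S17
open Finset

section zmod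
variable {p : ℕ} [hp : Fact p.Prime]
open Polynomial

lemma natDegree_Pp {K : Type*} [Field K] (n : ℕ) : (Pp K n).natDegree ≤ n - 1 := by
  rw [natDegree_le_iff_coeff_eq_zero]
  have key : ∀ n k : ℕ, n ≤ k → 0 < k → es K k n = 0 := by
    intro n
    induction n with
    | zero => intro k _ h; cases k with
      | zero => omega
      | succ k => simp [es]
    | succ n ih =>
      intro k h h0
      cases k with
      | zero => omega
      | succ k =>
        have := ih (k + 1) (by omega) (by omega)
        simp only [es] at this ⊢
        rw [Finset.sum_range_succ, this]
        rcases Nat.eq_zero_or_pos k with h1 | h1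
        · have : n = 0 := by omega
          subst this; simp
        · rw [ih k (by omega) h1]; simp
  intro k hk
  rw [coeff_Pp]
  exact key n k (by omega) (by omega)

lemma poly_eq (f g : (ZMod p)[X]) (hf : f.natDegree < p) (hg : g.natDegree < p)
    (h : ∀ n : ℕ, f.eval (n : ZMod p) = g.eval (n : ZMod p)) : f = g := by
  rw [← sub_eq_zero]
  apply Polynomial.eq_zero_of_natDegree_lt_card_of_eval_eq_zero (f - g)
    (f := fun x : ZMod p => x) Function.injective_id
  · intro x
    have := h x.val
    rw [ZMod.natCast_zmod_val] at this
    simp [this]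
  · rw [ZMod.card]
    exact lt_of_le_of_lt (natDegree_sub_le _ _) (by simp [hf, hg])

lemma cast_ne {i : ℕ} (h0 : 0 < i) (h : i < p) : (i : ZMod p) ≠ 0 := by
  rw [Ne, ZMod.natCast_eq_zero_iff]
  exact fun h' => absurd (Nat.le_of_dvd h0 h') (by omega)

lemma Pp_p : Pp (ZMod p) p = 1 - X ^ (p - 1) := by
  have h2 := hp.out.two_le
  apply poly_eq
  · exact lt_of_le_of_lt (natDegree_Pp p) (by omega)
  · exact lt_of_le_of_lt (natDegree_sub_le _ _) (by simp; omega)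
  · intro n
    by_cases hn : (n : ZMod p) = 0
    · rw [hn]
      simp [Pp, eval_prod, show p - 1 ≠ 0 by omega]
    · simp only [eval_sub, eval_one, eval_pow, eval_X, ZMod.pow_card_sub_one_eq_one hn, sub_self]
      rw [Pp, eval_prod]
      apply Finset.prod_eq_zero (i := (-(n : ZMod p)).val)
      · simpa using ZMod.val_lt _
      · simp [hn]

lemma Pp_shift (n : ℕ) (hn : n + 1 ≤ p) (x : ZMod p) :
    (x + (n + 1 : ℕ)) * (Pp (ZMod p) (n + 1)).eval x =
      (x + 1) * (Pp (ZMod p) (n + 1)).eval (x + 1) := by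
  induction n with
  | zero => simp [Pp]
  | succ n ih =>
    have ih := ih (by omega)
    have h0 : ((n + 1 : ℕ) : ZMod p) ≠ 0 := cast_ne (by omega) (by omega)
    have e : ∀ y, (Pp (ZMod p) (n + 1 + 1)).eval y =
        (Pp (ZMod p) (n + 1)).eval y * (1 + 1 / ((n + 1 : ℕ) : ZMod p) * y) := by
      intro y; simp [Pp, Finset.prod_range_succ _ (n + 1)]
    rw [e, e]
    have e2 : ∀ y : ZMod p, 1 + 1 / ((n + 1 : ℕ) : ZMod p) * y =
       (y + (n + 1 : ℕ)) / ((n + 1 : ℕ) : ZMod p) := by intro y; field_simp; ring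
    rw [e2, e2]
    push_cast at *
    rw [← mul_div_assoc, ← mul_div_assoc, ← mul_div_assoc, ← mul_div_assoc]
    congr 1
    linear_combination (x + (n + 1 + 1)) * ih

/-- generating polynomial -/
noncomputable def Rp (p : ℕ) [Fact p.Prime] : (ZMod p)[X] :=
  ∑ n ∈ range p, C (1 / (n : ZMod p) ^ 2) * (Pp (ZMod p) n * X)

lemma Q1_eq : ∑ n ∈ range p, C (1 / (n : ZMod p)) * Pp (ZMod p) n = - X ^ (p - 2) := by
  have h2 := hp.out.two_le
  have : (∑ n ∈ range p, C (1 / (n : ZMod p)) * Pp (ZMod p) n) * X = (- X ^ (p - 2)) * X := by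
    have h : ∀ n : ℕ, C (1 / (n : ZMod p)) * Pp (ZMod p) n * X =
        Pp (ZMod p) (n + 1) - Pp (ZMod p) n := by
      intro n
      simp only [Pp, Finset.prod_range_succ]; ring
    rw [Finset.sum_mul]
    simp_rw [h]
    rw [Finset.sum_range_sub, Pp_p, neg_mul, ← pow_succ, show p - 2 + 1 = p - 1 by omega]
    simp [Pp]
  exact mul_right_cancel₀ X_ne_zero this

lemma Rp_step (x : ZMod p) : (Rp p).eval (x + 1) - (Rp p).eval x = - x ^ (p - 2) := by
  have h := congrArg (Polynomial.eval x) (Q1_eq (p := p))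
  simp only [eval_finsetSum, eval_mul, eval_C, eval_neg, eval_pow, eval_X] at h
  rw [← h]
  simp only [Rp, eval_finsetSum, eval_mul, eval_C, eval_X]
  rw [← Finset.sum_sub_distrib]
  refine Finset.sum_congr rfl fun n hn => ?_
  rcases n with _ | n
  · simp
  · have hn := Finset.mem_range.1 hn
    have := Pp_shift n (by omega) x
    have h0 : ((n + 1 : ℕ) : ZMod p) ≠ 0 := cast_ne (by omega) (by omega)
    field_simp
    linear_combination - this

lemma Rp_eval (n : ℕ) : (Rp p).eval (n : ZMod p) = - ∑ i ∈ range n, (i : ZMod p) ^ (p - 2) := by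
  induction n with
  | zero => simp [Rp, eval_finsetSum]
  | succ n ih =>
    have := Rp_step (n : ZMod p)
    rw [Finset.sum_range_succ]
    push_cast
    linear_combination this + ih

lemma Rp_coeff (k : ℕ) : (Rp p).coeff (k + 1) =
    ∑ n ∈ range p, es (ZMod p) k n / (n : ZMod p) ^ 2 := by
  simp only [Rp, finsetSum_coeff, coeff_C_mul, coeff_mul_X, coeff_Pp]
  refine Finset.sum_congr rfl fun n hn => ?_
  ring

lemma Rp_natDegree : (Rp p).natDegree < p := by
  have h2 := hp.out.two_le
  refine lt_of_le_of_lt (natDegree_sum_le_of_forall_le (n := p - 1) _ _ ?_) (by omega)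
  intro n hn
  have hn := Finset.mem_range.1 hn
  refine (natDegree_C_mul_le _ _).trans (natDegree_mul_le.trans ?_)
  have := natDegree_Pp (K := ZMod p) n
  rw [natDegree_X]
  omega

lemma es_sum (b : ℕ → ZMod p)
    (hb : ∀ n : ℕ, - ∑ i ∈ range n, (i : ZMod p) ^ (p - 2) =
      ∑ j ∈ range (p - 1), b j * ((p - 1).choose j) * (n : ZMod p) ^ (p - 1 - j))
    (k : ℕ) (hk : k ≤ p - 2) :
    ∑ n ∈ range p, es (ZMod p) k n / (n : ZMod p) ^ 2 =
      b (p - 2 - k) * ((p - 1).choose (p - 2 - k)) := by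
  have h2 := hp.out.two_le
  have : Rp p = ∑ j ∈ range (p - 1), C (b j * ((p - 1).choose j)) * X ^ (p - 1 - j) := by
    apply poly_eq _ _ Rp_natDegree
    · refine lt_of_le_of_lt (natDegree_sum_le_of_forall_le (n := p - 1) _ _ ?_) (by omega)
      intro n hn
      exact (natDegree_C_mul_X_pow_le _ _).trans (by omega)
    · intro n
      rw [Rp_eval, hb]
      simp [eval_finsetSum]
  rw [← Rp_coeff, this, finsetSum_coeff]
  rw [Finset.sum_eq_single (p - 2 - k)]
  · rw [coeff_C_mul, coeff_X_pow, if_pos (by omega), mul_one]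
  · intro j hj hne
    have := Finset.mem_range.1 hj
    rw [coeff_C_mul, coeff_X_pow, if_neg (by omega), mul_zero]
  · intro h; exact absurd (Finset.mem_range.2 (by omega)) h

end zmod
end S17

namespace S17
open Finset

section intpoly
open Polynomial

/-- `∏_{i=1}^n (X+i)` over the integers. -/
noncomputable def Ph (n : ℕ) : ℤ[X] := ∏ i ∈ range n, (X + C ((i : ℤ) + 1))

lemma Ph_coeff {K : Type*} [Field K] (n : ℕ) (h : ∀ i < n, ((i + 1 : ℕ) : K) ≠ 0) (k : ℕ) :
    (((Ph n).coeff k : ℤ) : K) = (n.factorial : K) * es K k (n + 1) := by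
  have e : (Ph n).map (Int.castRingHom K) = C (n.factorial : K) * Pp K (n + 1) := by
    rw [Ph, Pp, Finset.prod_range_succ', Polynomial.map_prod]
    rw [← Finset.prod_range_add_one_eq_factorial]
    push_cast
    rw [map_prod C]
    simp only [div_zero, map_zero, zero_mul, add_zero, mul_one]
    rw [← Finset.prod_mul_distrib]
    refine Finset.prod_congr rfl fun i hi => ?_
    have h0 := h i (Finset.mem_range.1 hi)
    push_cast at h0
    have : C ((i : K) + 1) * C (1 / ((i : K) + 1)) = 1 := by
      rw [← C_mul, mul_one_div_cancel h0, C_1]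
    rw [Polynomial.map_add, map_X, map_C]
    simp only [eq_intCast, Int.cast_add, Int.cast_one, Int.cast_natCast]
    linear_combination - X * this
  have := congrArg (fun q => q.coeff k) e
  simpa [coeff_map, coeff_C_mul, coeff_Pp] using this

lemma Ph_zero (n : ℕ) : (Ph n).coeff 0 = n.factorial := by
  have := Ph_coeff (K := ℚ) n (fun i _ => by positivity) 0
  simp only [es, mul_one] at this
  exact_mod_cast this

lemma taylor_three (Q : ℤ[X]) (c : ℤ) (k : ℕ) : ∃ z : ℤ, (taylor c Q).coeff k =
    Q.coeff k + (k + 1) * c * Q.coeff (k + 1) + ((k + 2).choose 2 : ℤ) * c ^ 2 * Q.coeff (k + 2)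
      + c ^ 3 * z := by
  rw [taylor_coeff]
  set H := hasseDeriv k Q with hH
  have h1 := congrArg (eval c) (divX_mul_X_add H)
  have h2 := congrArg (eval c) (divX_mul_X_add H.divX)
  have h3 := congrArg (eval c) (divX_mul_X_add H.divX.divX)
  simp only [eval_add, eval_mul, eval_X, eval_C, coeff_divX, zero_add] at h1 h2 h3
  refine ⟨eval c H.divX.divX.divX, ?_⟩
  have c0 : H.coeff 0 = Q.coeff k := by simp [hH, hasseDeriv_coeff]
  have c1 : H.coeff 1 = (k + 1) * Q.coeff (k + 1) := by
    rw [hH, hasseDeriv_coeff, add_comm 1 k, Nat.choose_succ_self_right]; push_cast; ring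
  have c2 : H.coeff (1 + 1) = ((k + 2).choose 2 : ℤ) * Q.coeff (k + 2) := by
    rw [hH, hasseDeriv_coeff, show 1 + 1 + k = k + 2 by omega,
      ← Nat.choose_symm (show 2 ≤ k + 2 by omega)]; simp
  rw [c0] at h1
  rw [c1] at h2
  rw [c2] at h3
  linear_combination -h1 - c * h2 - c ^ 2 * h3

variable {p : ℕ} [hp : Fact p.Prime]

lemma Ph_dvd (k : ℕ) (h1 : 1 ≤ k) (h2 : k ≤ p - 2) : (p : ℤ) ∣ (Ph (p - 1)).coeff k := by
  have := hp.out.two_le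
  rw [← ZMod.intCast_zmod_eq_zero_iff_dvd _ p, Ph_coeff]
  · rw [show p - 1 + 1 = p by omega, ← coeff_Pp, Pp_p]
    simp [coeff_one, coeff_X_pow, show k ≠ 0 by omega, show k ≠ p - 1 by omega]
  · intro i hi
    exact cast_ne (by omega) (by omega)

lemma Ph_reflect (hodd : Even (p - 1)) :
    taylor (-(p : ℤ)) (Ph (p - 1)) = (Ph (p - 1)).comp (-X) := by
  have h2 := hp.out.two_le
  rw [Ph, taylor_apply, Polynomial.prod_comp, Polynomial.prod_comp]
  rw [← Finset.prod_range_reflect]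
  have : ∏ i ∈ range (p - 1), (X + C ((i : ℤ) + 1)).comp (-X) =
    ∏ i ∈ range (p - 1), ((-1 : ℤ[X]) * (X - C ((i : ℤ) + 1))) := by
    refine Finset.prod_congr rfl fun i hi => ?_
    simp; ring
  rw [this, Finset.prod_mul_distrib, Finset.prod_const, Finset.card_range, hodd.neg_one_pow,
    one_mul]
  refine Finset.prod_congr rfl fun i hi => ?_
  have hi := Finset.mem_range.1 hi
  have e : ((p - 1 - 1 - i : ℕ) : ℤ) = p - 2 - i := by omega
  rw [e]
  simp
  ring

lemma Ph_odd_dvd (h11 : 11 ≤ p) (k : ℕ) (hk : Odd k) (h2 : k + 1 ≤ p - 2) :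
    (p : ℤ) ^ 2 ∣ (Ph (p - 1)).coeff k := by
  have hodd : Even (p - 1) := hp.out.even_sub_one (by omega)
  have h := congrArg (fun q => q.coeff k) (Ph_reflect hodd)
  obtain ⟨z, hz⟩ := taylor_three (Ph (p - 1)) (-(p : ℤ)) k
  obtain ⟨y, hy⟩ := Ph_dvd (p := p) (k + 1) (by omega) h2
  rw [show (-X : ℤ[X]) = C (-1) * X by simp] at h
  simp only [comp_C_mul_X_coeff, hk.neg_one_pow] at h
  rw [hz, hy] at h
  have h3 : (p : ℤ) ^ 2 ∣ 2 * (Ph (p - 1)).coeff k := by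
    refine ⟨(k + 1) * y - ((k + 2).choose 2 : ℤ) * (Ph (p - 1)).coeff (k + 2) + p * z, ?_⟩
    linear_combination h
  refine IsCoprime.dvd_of_dvd_mul_left (IsCoprime.pow_left ?_) h3
  exact_mod_cast Nat.isCoprime_iff_coprime.2 ((Nat.coprime_primes hp.out Nat.prime_two).2 (by omega))

lemma W_facts (h11 : 11 ≤ p) : ∃ u v w : ℤ,
    (Ph (p - 1) * taylor (p : ℤ) (Ph (p - 1))).coeff 4 =
      2 * (Ph (p - 1)).coeff 0 * (Ph (p - 1)).coeff 4 + (Ph (p - 1)).coeff 2 ^ 2 + (p : ℤ) ^ 3 * u ∧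
    (Ph (p - 1) * taylor (p : ℤ) (Ph (p - 1))).coeff 5 = (p : ℤ) ^ 2 * v ∧
    (taylor (p : ℤ) (Ph (p - 1))).coeff 0 = (Ph (p - 1)).coeff 0 + (p : ℤ) ^ 3 * w := by
  obtain ⟨z0, hz0⟩ := taylor_three (Ph (p - 1)) (p : ℤ) 0
  obtain ⟨z1, hz1⟩ := taylor_three (Ph (p - 1)) (p : ℤ) 1
  obtain ⟨z2, hz2⟩ := taylor_three (Ph (p - 1)) (p : ℤ) 2
  obtain ⟨z3, hz3⟩ := taylor_three (Ph (p - 1)) (p : ℤ) 3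
  obtain ⟨z4, hz4⟩ := taylor_three (Ph (p - 1)) (p : ℤ) 4
  obtain ⟨z5, hz5⟩ := taylor_three (Ph (p - 1)) (p : ℤ) 5
  obtain ⟨y1, hy1⟩ := Ph_odd_dvd h11 1 (by decide) (by omega)
  obtain ⟨y2, hy2⟩ := Ph_dvd (p := p) 2 (by omega) (by omega)
  obtain ⟨y3, hy3⟩ := Ph_odd_dvd h11 3 (by decide) (by omega)
  obtain ⟨y4, hy4⟩ := Ph_dvd (p := p) 4 (by omega) (by omega)
  obtain ⟨y5, hy5⟩ := Ph_odd_dvd h11 5 (by decide) (by omega)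
  obtain ⟨y6, hy6⟩ := Ph_dvd (p := p) 6 (by omega) (by omega)
  generalize Ph (p - 1) = Q at *
  norm_num [Nat.choose] at hz0 hz1 hz2 hz3 hz4 hz5
  have c4 : (Q * taylor (p : ℤ) Q).coeff 4 = Q.coeff 0 * (taylor (p : ℤ) Q).coeff 4 +
    Q.coeff 1 * (taylor (p : ℤ) Q).coeff 3 + Q.coeff 2 * (taylor (p : ℤ) Q).coeff 2 +
    Q.coeff 3 * (taylor (p : ℤ) Q).coeff 1 + Q.coeff 4 * (taylor (p : ℤ) Q).coeff 0 := by
    rw [coeff_mul, Finset.Nat.sum_antidiagonal_eq_sum_range_succ_mk]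
    simp [Finset.sum_range_succ]
  have c5 : (Q * taylor (p : ℤ) Q).coeff 5 = Q.coeff 0 * (taylor (p : ℤ) Q).coeff 5 +
    Q.coeff 1 * (taylor (p : ℤ) Q).coeff 4 + Q.coeff 2 * (taylor (p : ℤ) Q).coeff 3 +
    Q.coeff 3 * (taylor (p : ℤ) Q).coeff 2 + Q.coeff 4 * (taylor (p : ℤ) Q).coeff 1 +
    Q.coeff 5 * (taylor (p : ℤ) Q).coeff 0 := by
    rw [coeff_mul, Finset.Nat.sum_antidiagonal_eq_sum_range_succ_mk]
    simp [Finset.sum_range_succ]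
  have t0 : (taylor (p : ℤ) Q).coeff 0 = Q.coeff 0 + (p : ℤ) ^ 3 * (y1 + y2 + z0) := by
    rw [taylor_coeff_zero, hz0, hy1, hy2]; ring
  have t1 : (taylor (p : ℤ) Q).coeff 1 = (p : ℤ) ^ 2 * (y1 + 2 * y2 + 3 * p ^ 2 * y3 + p * z1) := by
    rw [taylor_coeff_one, hz1, hy1, hy2, hy3]; ring
  have t2 : (taylor (p : ℤ) Q).coeff 2 = Q.coeff 2 + (p : ℤ) ^ 3 * (3 * y3 + 6 * y4 + z2) := by
    rw [hz2, hy3, hy4]; ring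
  have t3 : (taylor (p : ℤ) Q).coeff 3 =
      (p : ℤ) ^ 2 * (y3 + 4 * y4 + 10 * p ^ 2 * y5 + p * z3) := by
    rw [hz3, hy3, hy4, hy5]; ring
  have t4 : (taylor (p : ℤ) Q).coeff 4 = Q.coeff 4 + (p : ℤ) ^ 3 * (5 * y5 + 15 * y6 + z4) := by
    rw [hz4, hy5, hy6]; ring
  have t5 : (taylor (p : ℤ) Q).coeff 5 =
      (p : ℤ) ^ 2 * (y5 + 6 * y6 + 21 * Q.coeff 7 + p * z5) := by
    rw [hz5, hy5, hy6]; ring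
  refine ⟨Q.coeff 0 * (5 * y5 + 15 * y6 + z4) + p * y1 * (y3 + 4 * y4 + 10 * p ^ 2 * y5 + p * z3)
    + Q.coeff 2 * (3 * y3 + 6 * y4 + z2) + p * y3 * (y1 + 2 * y2 + 3 * p ^ 2 * y3 + p * z1)
    + Q.coeff 4 * (y1 + y2 + z0),
    Q.coeff 0 * (y5 + 6 * y6 + 21 * Q.coeff 7 + p * z5) + y1 * (taylor (p : ℤ) Q).coeff 4
    + Q.coeff 2 * (y3 + 4 * y4 + 10 * p ^ 2 * y5 + p * z3) + y3 * (taylor (p : ℤ) Q).coeff 2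
    + Q.coeff 4 * (y1 + 2 * y2 + 3 * p ^ 2 * y3 + p * z1) + y5 * (taylor (p : ℤ) Q).coeff 0,
    y1 + y2 + z0, ?_, ?_, t0⟩
  · rw [c4, t0, t1, t2, t3, t4, hy1, hy3]; ring
  · rw [c5, t1, t3, t5, hy1, hy3, hy5]; ring

lemma Ph_two {p : ℕ} (h1 : 1 ≤ p) : Ph (2 * p - 1) =
    Ph (p - 1) * taylor (p : ℤ) (Ph (p - 1)) * (X + C (p : ℤ)) := by
  rw [show 2 * p - 1 = (p - 1) + 1 + (p - 1) by omega, Ph, Finset.prod_range_add,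
    Finset.prod_range_succ]
  have e : taylor (p : ℤ) (Ph (p - 1)) =
    ∏ x ∈ range (p - 1), (X + C (((p - 1 + 1 + x : ℕ) : ℤ) + 1)) := by
    rw [Ph, taylor_apply, Polynomial.prod_comp]
    refine Finset.prod_congr rfl fun i hi => ?_
    rw [show p - 1 + 1 + i = p + i by omega]
    simp
    ring
  rw [e, show ((p - 1 : ℕ) : ℤ) + 1 = p by omega]
  simp only [Ph]
  ring

end intpoly
end S17

namespace S17
open Finset

section padic
variable {p : ℕ} [hp : Fact p.Prime]

/-- inverse in `ℤ_[p]` (zero on nonunits). -/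
noncomputable def iv (p : ℕ) [Fact p.Prime] (l : ℕ) : ℤ_[p] := Ring.inverse (l : ℤ_[p])

lemma isUnit_nat {l : ℕ} : IsUnit (l : ℤ_[p]) ↔ ¬ p ∣ l := by
  rw [PadicInt.isUnit_iff, PadicInt.norm_natCast_eq_one_iff, Nat.Prime.coprime_iff_not_dvd hp.out]

lemma iv_mul {l : ℕ} (h : ¬ p ∣ l) : (l : ℤ_[p]) * iv p l = 1 :=
  Ring.mul_inverse_cancel _ (isUnit_nat.2 h)

lemma iv_dvd {l : ℕ} (h : p ∣ l) : iv p l = 0 :=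
  Ring.inverse_non_unit _ (fun h' => isUnit_nat.1 h' h)

lemma iv_zero : iv p 0 = 0 := iv_dvd (dvd_zero p)

lemma coe_iv {l : ℕ} (h : ¬ p ∣ l) : ((iv p l : ℤ_[p]) : ℚ_[p]) = 1 / l := by
  have h1 := congrArg (fun z : ℤ_[p] => (z : ℚ_[p])) (iv_mul h)
  simp only [PadicInt.coe_mul, PadicInt.coe_natCast, PadicInt.coe_one] at h1
  have : (l : ℚ_[p]) ≠ 0 := fun h0 => by simp [h0] at h1
  rw [eq_div_iff this, mul_comm, h1]

lemma coe_iv_lt {l : ℕ} (h : l < p) : ((iv p l : ℤ_[p]) : ℚ_[p]) = 1 / l := by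
  rcases Nat.eq_zero_or_pos l with h0 | h0
  · subst h0; simp [iv_zero]
  · exact coe_iv (fun h' => absurd (Nat.le_of_dvd h0 h') (by omega))

lemma toZMod_iv (l : ℕ) : PadicInt.toZMod (iv p l) = (l : ZMod p)⁻¹ := by
  by_cases h : p ∣ l
  · rw [iv_dvd h, (ZMod.natCast_eq_zero_iff _ _).2 h]; simp
  · have h1 := congrArg PadicInt.toZMod (iv_mul h)
    simp only [map_mul, map_natCast, map_one] at h1
    exact (inv_eq_of_mul_eq_one_right h1).symm

/-- Integral version of `es`. -/
noncomputable def eZ (p : ℕ) [Fact p.Prime] : ℕ → ℕ → ℤ_[p]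
  | 0, _ => 1
  | k + 1, n => ∑ j ∈ range n, eZ p k j * iv p j

lemma toZMod_eZ (k n : ℕ) : PadicInt.toZMod (eZ p k n) = es (ZMod p) k n := by
  induction k generalizing n with
  | zero => simp [eZ, es]
  | succ k ih => simp [eZ, es, ih, toZMod_iv, div_eq_mul_inv]

lemma coe_eZ (k n : ℕ) (hn : n ≤ p) : ((eZ p k n : ℤ_[p]) : ℚ_[p]) = es ℚ_[p] k n := by
  induction k generalizing n with
  | zero => simp [eZ, es]
  | succ k ih =>
    simp only [eZ, es, PadicInt.coe_sum, PadicInt.coe_mul]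
    refine Finset.sum_congr rfl fun j hj => ?_
    have := Finset.mem_range.1 hj
    rw [ih j (by omega), coe_iv_lt (by omega)]
    ring

lemma toZMod_eq_zero_iff (x : ℤ_[p]) : PadicInt.toZMod x = 0 ↔ (p : ℤ_[p]) ∣ x := by
  rw [← RingHom.mem_ker, PadicInt.ker_toZMod, PadicInt.maximalIdeal_eq_span_p,
    Ideal.mem_span_singleton]

open Polynomial in
/-- The truncated logarithm. -/
noncomputable def fp (p : ℕ) [Fact p.Prime] (B : ℕ) : ℤ_[p][X] := ∑ l ∈ range B, C (iv p l) * X ^ l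

open Polynomial in
lemma fp_coeff (B n : ℕ) : (fp p B).coeff n = if n < B then iv p n else 0 := by
  simp [fp, finsetSum_coeff, coeff_C_mul, coeff_X_pow]

/-- The `p`-level sums. -/
noncomputable def Sk (p : ℕ) [Fact p.Prime] (k : ℕ) : ℤ_[p] := (fp p p ^ 6).coeff (k * p)

/-- truncated log as a power series -/
noncomputable def fK (p : ℕ) [Fact p.Prime] : PowerSeries ℚ_[p] :=
  PowerSeries.mk fun n => if n < p then 1 / (n : ℚ_[p]) else 0

/-- tail of the log series -/
noncomputable def gK (p : ℕ) [Fact p.Prime] : PowerSeries ℚ_[p] :=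
  PowerSeries.mk fun n => if n < p then 0 else 1 / (n : ℚ_[p])

lemma fK_eq : fK p = Fs ℚ_[p] - gK p := by
  ext n
  simp only [fK, Fs, gK, map_sub, PowerSeries.coeff_mk]
  split_ifs <;> simp

lemma Sk_coe (k : ℕ) : ((Sk p k : ℤ_[p]) : ℚ_[p]) = PowerSeries.coeff (k * p) (fK p ^ 6) := by
  have h : fK p = (((fp p p).map (algebraMap ℤ_[p] ℚ_[p]) : Polynomial ℚ_[p]) :
      PowerSeries ℚ_[p]) := by
    ext n
    rw [Polynomial.coeff_coe, Polynomial.coeff_map, fp_coeff, fK, PowerSeries.coeff_mk]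
    split_ifs with hn
    · exact (coe_iv_lt hn).symm
    · simp
  rw [h, ← Polynomial.coe_pow, Polynomial.coeff_coe, ← Polynomial.map_pow, Polynomial.coeff_map]
  rfl

lemma X_dvd_gK : (PowerSeries.X : PowerSeries ℚ_[p]) ^ p ∣ gK p := by
  rw [PowerSeries.X_pow_dvd_iff]
  intro m hm
  simp [gK, hm]

lemma X_dvd_Fs : (PowerSeries.X : PowerSeries ℚ_[p]) ∣ Fs ℚ_[p] := by
  rw [PowerSeries.X_dvd_iff]
  simp [Fs]

lemma Sk_one : ((Sk p 1 : ℤ_[p]) : ℚ_[p]) = 720 / p * es ℚ_[p] 5 p := by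
  rw [Sk_coe, one_mul, fK_eq]
  have hX : (PowerSeries.X : PowerSeries ℚ_[p]) ∣ gK p :=
    (dvd_pow_self _ hp.out.ne_zero).trans X_dvd_gK
  have h : (PowerSeries.X : PowerSeries ℚ_[p]) ^ (p + 1) ∣
      (Fs ℚ_[p] - gK p) ^ 6 - Fs ℚ_[p] ^ 6 := by
    have e : (Fs ℚ_[p] - gK p) ^ 6 - Fs ℚ_[p] ^ 6 = gK p * (Fs ℚ_[p] * (- 6 * Fs ℚ_[p] ^ 4
      + 15 * Fs ℚ_[p] ^ 3 * gK p - 20 * Fs ℚ_[p] ^ 2 * gK p ^ 2 + 15 * Fs ℚ_[p] * gK p ^ 3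
      - 6 * gK p ^ 4) + gK p * gK p ^ 4) := by ring
    rw [e, pow_succ]
    exact mul_dvd_mul X_dvd_gK (dvd_add (X_dvd_Fs.mul_right _) (hX.mul_right _))
  have := PowerSeries.X_pow_dvd_iff.1 h p (by omega)
  rw [map_sub, sub_eq_zero] at this
  rw [this, coeff_Fs_pow 5]
  norm_num [Nat.factorial]

lemma Sk_two : ((Sk p 2 : ℤ_[p]) : ℚ_[p]) = 360 / p * es ℚ_[p] 5 (2 * p) -
    720 * (∑ n ∈ range p, es ℚ_[p] 4 n / n / (2 * p - n : ℕ) + es ℚ_[p] 4 p / p ^ 2) := by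
  rw [Sk_coe, fK_eq]
  have hX : (PowerSeries.X : PowerSeries ℚ_[p]) ∣ gK p :=
    (dvd_pow_self _ hp.out.ne_zero).trans X_dvd_gK
  have h : (PowerSeries.X : PowerSeries ℚ_[p]) ^ (2 * p + 1) ∣
      (Fs ℚ_[p] - gK p) ^ 6 - (Fs ℚ_[p] ^ 6 - PowerSeries.C 6 * (Fs ℚ_[p] ^ 5 * gK p)) := by
    have e : (Fs ℚ_[p] - gK p) ^ 6 - (Fs ℚ_[p] ^ 6 - PowerSeries.C 6 * (Fs ℚ_[p] ^ 5 * gK p)) =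
      gK p * gK p * (Fs ℚ_[p] * (15 * Fs ℚ_[p] ^ 3 - 20 * Fs ℚ_[p] ^ 2 * gK p
        + 15 * Fs ℚ_[p] * gK p ^ 2 - 6 * gK p ^ 3) + gK p * gK p ^ 3) := by
      rw [show (PowerSeries.C (6 : ℚ_[p])) = 6 from map_ofNat _ 6]
      ring
    rw [e, pow_succ, two_mul, pow_add]
    exact mul_dvd_mul (mul_dvd_mul X_dvd_gK X_dvd_gK)
      (dvd_add (X_dvd_Fs.mul_right _) (hX.mul_right _))
  have := PowerSeries.X_pow_dvd_iff.1 h (2 * p) (by omega)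
  rw [map_sub, sub_eq_zero] at this
  rw [this, map_sub, coeff_Fs_pow 5, PowerSeries.coeff_C_mul, PowerSeries.coeff_mul,
    Finset.Nat.sum_antidiagonal_eq_sum_range_succ_mk, show (2 * p).succ = (p + 1) + p by omega,
    Finset.sum_range_add, Finset.sum_range_succ]
  have h0 : ∑ x ∈ range p, (PowerSeries.coeff (p + 1 + x)) (Fs ℚ_[p] ^ 5) *
      (PowerSeries.coeff (2 * p - (p + 1 + x))) (gK p) = 0 := by
    apply Finset.sum_eq_zero
    intro x _
    have := hp.out.pos
    rw [gK, PowerSeries.coeff_mk, if_pos (by omega), mul_zero]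
  have h1 : ∑ x ∈ range p, (PowerSeries.coeff x) (Fs ℚ_[p] ^ 5) *
      (PowerSeries.coeff (2 * p - x)) (gK p) =
      120 * ∑ n ∈ range p, es ℚ_[p] 4 n / n / (2 * p - n : ℕ) := by
    rw [Finset.mul_sum]
    refine Finset.sum_congr rfl fun x hx => ?_
    have := Finset.mem_range.1 hx
    rw [gK, PowerSeries.coeff_mk, if_neg (by omega), coeff_Fs_pow 4]
    norm_num [Nat.factorial]
    ring
  simp only [h0, h1]
  rw [gK, PowerSeries.coeff_mk, if_neg (by omega), coeff_Fs_pow 4, show 2 * p - p = p by omega]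
  have hp0 : (p : ℚ_[p]) ≠ 0 := by exact_mod_cast hp.out.ne_zero
  norm_num [Nat.factorial]
  field_simp
  ring

lemma es_two_p : 6 / p * es ℚ_[p] 2 p =
    ∑ n ∈ range p, 2 * (es ℚ_[p] 1 n / n / (p - n : ℕ)) := by
  have h : PowerSeries.coeff p (Fs ℚ_[p] ^ 3) = 6 / p * es ℚ_[p] 2 p := by
    rw [coeff_Fs_pow 2]; norm_num [Nat.factorial]
  rw [← h, pow_succ, PowerSeries.coeff_mul, Finset.Nat.sum_antidiagonal_eq_sum_range_succ_mk,
    Finset.sum_range_succ]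
  simp only [coeff_Fs_pow 1, coeff_Fs]
  simp only [Nat.sub_self, Nat.cast_zero, div_zero, mul_zero, add_zero]
  refine Finset.sum_congr rfl fun x hx => ?_
  norm_num [Nat.factorial]
  ring

end padic
end S17

namespace S17
open Finset

section padic2
variable {p : ℕ} [hp : Fact p.Prime]
open Polynomial

lemma pext {x y : ℤ_[p]} (h : (x : ℚ_[p]) = (y : ℚ_[p])) : x = y := PadicInt.ext h

lemma coe_ofNat' (n : ℕ) [n.AtLeastTwo] :
    ((OfNat.ofNat n : ℤ_[p]) : ℚ_[p]) = OfNat.ofNat n := map_ofNat PadicInt.Coe.ringHom n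

lemma Ph_coeff_p (k : ℕ) : (((Ph (p - 1)).coeff k : ℤ) : ℚ_[p]) =
    (((Ph (p - 1)).coeff 0 : ℤ) : ℚ_[p]) * es ℚ_[p] k p := by
  rw [Ph_coeff _ (fun i _ => by exact_mod_cast Nat.succ_ne_zero i), Ph_zero,
    Nat.sub_add_cancel hp.out.one_le]
  simp

lemma a0_ne : (((Ph (p - 1)).coeff 0 : ℤ) : ZMod p) ≠ 0 := by
  rw [Ph_zero]
  have : (((p - 1).factorial : ℕ) : ZMod p) ≠ 0 := by
    rw [Ne, ZMod.natCast_eq_zero_iff, hp.out.dvd_factorial]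
    have := hp.out.pos
    omega
  exact_mod_cast this

lemma a0_neK : (((Ph (p - 1)).coeff 0 : ℤ) : ℚ_[p]) ≠ 0 := by
  rw [Ph_zero]
  exact_mod_cast Nat.factorial_ne_zero _

lemma pK_ne : (p : ℚ_[p]) ≠ 0 := by exact_mod_cast hp.out.ne_zero

lemma Sk_one_mod (h11 : 11 ≤ p) : PadicInt.toZMod (Sk p 1) = 0 := by
  obtain ⟨y, hy⟩ := Ph_odd_dvd h11 5 (by decide) (by omega)
  have h := Sk_one (p := p)
  have h5 := Ph_coeff_p (p := p) 5
  have hz : (((Ph (p - 1)).coeff 0 : ℤ) : ℤ_[p]) * Sk p 1 = 720 * p * (y : ℤ_[p]) := by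
    apply pext
    rw [hy] at h5
    have h0 := pK_ne (p := p)
    push_cast at h5 ⊢
    have e720 : ((720 : ℤ_[p]) : ℚ_[p]) = 720 := coe_ofNat' 720
    rw [h, e720]
    field_simp
    linear_combination (-1) * h5
  have := congrArg PadicInt.toZMod hz
  simp only [map_mul, map_intCast, map_natCast, CharP.cast_eq_zero, mul_zero, zero_mul] at this
  exact (mul_eq_zero.1 this).resolve_left a0_ne

lemma Sk_two_mod (h11 : 11 ≤ p) : PadicInt.toZMod (Sk p 2) =
    40 * (∑ n ∈ range p, es (ZMod p) 1 n / (n : ZMod p) ^ 2) ^ 2 +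
    720 * (∑ n ∈ range p, es (ZMod p) 4 n / (n : ZMod p) ^ 2) := by
  obtain ⟨u, v, w, hu, hv, hw⟩ := W_facts h11
  have h0 := pK_ne (p := p)
  have ha := a0_neK (p := p)
  -- es 5 (2p)
  have hE : (((Ph (2 * p - 1)).coeff 5 : ℤ) : ℚ_[p]) =
      (((Ph (2 * p - 1)).coeff 0 : ℤ) : ℚ_[p]) * es ℚ_[p] 5 (2 * p) := by
    rw [Ph_coeff _ (fun i _ => by exact_mod_cast Nat.succ_ne_zero i), Ph_zero,
      Nat.sub_add_cancel (by omega)]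
    simp
  have hne : (((Ph (2 * p - 1)).coeff 0 : ℤ) : ℚ_[p]) ≠ 0 := by
    rw [Ph_zero]
    exact_mod_cast Nat.factorial_ne_zero _
  rw [Ph_two (by omega), mul_add, coeff_add, coeff_mul_X, coeff_mul_C, hu, hv, coeff_add,
    coeff_mul_X_zero, coeff_mul_C, mul_coeff_zero, hw, zero_add] at hE
  rw [Ph_two (by omega), mul_add, coeff_add,
    coeff_mul_X_zero, coeff_mul_C, mul_coeff_zero, hw, zero_add] at hne
  have h4 := Ph_coeff_p (p := p) 4
  have h2 := Ph_coeff_p (p := p) 2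
  have hS := Sk_two (p := p)
  have hT := es_two_p (p := p)
  set s : ℤ_[p] := ∑ n ∈ range p, eZ p 4 n * iv p n * iv p (2 * p - n) with hs
  set t : ℤ_[p] := ∑ n ∈ range p, 2 * (eZ p 1 n * iv p n * iv p (p - n)) with ht
  have hsK : (s : ℚ_[p]) = ∑ n ∈ range p, es ℚ_[p] 4 n / n / (2 * p - n : ℕ) := by
    rw [hs, PadicInt.coe_sum]
    refine Finset.sum_congr rfl fun n hn => ?_
    have hn := Finset.mem_range.1 hn
    rw [PadicInt.coe_mul, PadicInt.coe_mul, coe_eZ _ _ hn.le, coe_iv_lt hn]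
    rcases Nat.eq_zero_or_pos n with h | h
    · subst h; simp
    rw [coe_iv]
    · ring
    · rw [Nat.dvd_sub_iff_right (by omega) (Dvd.intro_left 2 rfl)]
      exact fun h' => absurd (Nat.le_of_dvd h h') (by omega)
  have htK : (t : ℚ_[p]) = ∑ n ∈ range p, 2 * (es ℚ_[p] 1 n / n / (p - n : ℕ)) := by
    rw [ht, PadicInt.coe_sum]
    refine Finset.sum_congr rfl fun n hn => ?_
    have hn := Finset.mem_range.1 hn
    rw [PadicInt.coe_mul, PadicInt.coe_mul, PadicInt.coe_mul, coe_eZ _ _ hn.le, coe_iv_lt hn]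
    rcases Nat.eq_zero_or_pos n with h | h
    · subst h; simp
    rw [coe_iv_lt (by omega), coe_ofNat']
    ring
  rw [← hsK] at hS
  rw [← htK] at hT
  have hsZ : PadicInt.toZMod s = - ∑ n ∈ range p, es (ZMod p) 4 n / (n : ZMod p) ^ 2 := by
    rw [hs, map_sum, ← Finset.sum_neg_distrib]
    refine Finset.sum_congr rfl fun n hn => ?_
    have hn := Finset.mem_range.1 hn
    rw [map_mul, map_mul, toZMod_eZ, toZMod_iv, toZMod_iv, Nat.cast_sub (by omega)]
    simp [← neg_inv]
    ring
  have htZ : PadicInt.toZMod t = - 2 * ∑ n ∈ range p, es (ZMod p) 1 n / (n : ZMod p) ^ 2 := by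
    rw [ht, map_sum, Finset.mul_sum]
    refine Finset.sum_congr rfl fun n hn => ?_
    have hn := Finset.mem_range.1 hn
    rw [map_mul, map_mul, map_mul, toZMod_eZ, toZMod_iv, toZMod_iv, Nat.cast_sub (by omega), map_ofNat]
    simp [← neg_inv]
    try ring_nf
    try exact Or.inl trivial
  have ha0 := a0_ne (p := p)
  generalize (Ph (p - 1)).coeff 0 = a0 at *
  generalize (Ph (p - 1)).coeff 2 = a2 at *
  generalize (Ph (p - 1)).coeff 4 = a4 at *
  have key : (a0 : ℤ_[p]) * (a0 + p ^ 3 * w) * (Sk p 2 + 720 * s) =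
      10 * a0 ^ 2 * t ^ 2 + 360 * p * (u + v - 2 * a4 * w) := by
    apply pext
    push_cast at hE hne ⊢
    have e720 : ((720 : ℤ_[p]) : ℚ_[p]) = 720 := coe_ofNat' 720
    have e360 : ((360 : ℤ_[p]) : ℚ_[p]) = 360 := coe_ofNat' 360
    have e10 : ((10 : ℤ_[p]) : ℚ_[p]) = 10 := coe_ofNat' 10
    have e2 : ((2 : ℤ_[p]) : ℚ_[p]) = 2 := coe_ofNat' 2
    rw [e720, e360, e10, e2]
    have e6 : 6 * es ℚ_[p] 2 p = p * t := by
      rw [← hT]; field_simp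
    have hA : (a0 : ℚ_[p]) + p ^ 3 * w ≠ 0 := by
      intro h; apply hne; rw [h]; ring
    rw [hS]
    apply mul_left_cancel₀ (pow_ne_zero 2 h0)
    have hq : (p : ℚ_[p]) ^ 2 * (360 / p * es ℚ_[p] 5 (2 * p) -
        720 * (s + es ℚ_[p] 4 p / p ^ 2) + 720 * s) =
        360 * p * es ℚ_[p] 5 (2 * p) - 720 * es ℚ_[p] 4 p := by
      field_simp
      ring
    linear_combination (a0 : ℚ_[p]) * (a0 + p ^ 3 * w) * hq - 360 * hE +
      720 * (a0 + p ^ 3 * w) * h4 + 360 * (a2 + a0 * es ℚ_[p] 2 p) * h2 +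
      10 * (a0 : ℚ_[p]) ^ 2 * (6 * es ℚ_[p] 2 p + p * t) * e6
  have := congrArg PadicInt.toZMod key
  simp only [map_mul, map_add, map_sub, map_pow, map_intCast, map_natCast, map_ofNat,
    CharP.cast_eq_zero, hsZ, htZ] at this
  have h3 : (a0 : ZMod p) ^ 2 * (PadicInt.toZMod (Sk p 2) -
    (40 * (∑ n ∈ range p, es (ZMod p) 1 n / (n : ZMod p) ^ 2) ^ 2 +
    720 * (∑ n ∈ range p, es (ZMod p) 4 n / (n : ZMod p) ^ 2))) = 0 := by
    linear_combination this
  exact sub_eq_zero.1 ((mul_eq_zero.1 h3).resolve_left (pow_ne_zero _ ha0))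

lemma bern_norm (j : ℕ) (hj : j < p - 1) : ‖((_root_.bernoulli j : ℚ) : ℚ_[p])‖ ≤ 1 := by
  induction j using Nat.strong_induction_on with
  | _ j ih =>
    have h := _root_.sum_bernoulli (j + 1)
    rw [Finset.sum_range_succ, Nat.choose_succ_self_right] at h
    have h' : ((j + 1 : ℕ) : ℚ) * _root_.bernoulli j = (if j + 1 = 1 then 1 else 0) -
      ∑ k ∈ range j, ((j + 1).choose k : ℚ) * _root_.bernoulli k := by linear_combination h
    have h2 := congrArg (fun q : ℚ => (q : ℚ_[p])) h'
    simp only [Rat.cast_mul, Rat.cast_natCast, Rat.cast_sub, Rat.cast_sum] at h2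
    have h3 : ‖((j + 1 : ℕ) : ℚ_[p])‖ = 1 := by
      rw [Padic.norm_natCast_eq_one_iff, Nat.Prime.coprime_iff_not_dvd hp.out]
      exact fun h' => absurd (Nat.le_of_dvd (by omega) h') (by omega)
    have h4 := congrArg norm h2
    rw [norm_mul, h3, one_mul] at h4
    rw [h4]
    have m : ∀ x : ℚ_[p], ‖x‖ ≤ 1 ↔ x ∈ PadicInt.subring p := fun x => Iff.rfl
    rw [m]
    refine sub_mem ?_ (sum_mem fun k hk => mul_mem (natCast_mem _ _) ?_)
    · split_ifs
      · simpa using one_mem _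
      · simpa using zero_mem _
    · have := Finset.mem_range.1 hk
      exact (m _).1 (ih k this (by omega))

lemma bern_exists : ∃ b : ℕ → ℤ_[p], ∀ j < p - 1, (b j : ℚ_[p]) = ((_root_.bernoulli j : ℚ) : ℚ_[p]) := by
  refine ⟨fun j => if h : j < p - 1 then ⟨_, bern_norm j h⟩ else 0, fun j hj => ?_⟩
  simp [hj]

lemma bern_faul (b : ℕ → ℤ_[p]) (hb : ∀ j < p - 1, (b j : ℚ_[p]) = ((_root_.bernoulli j : ℚ) : ℚ_[p]))
    (n : ℕ) : - ∑ i ∈ range n, (i : ZMod p) ^ (p - 2) =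
      ∑ j ∈ range (p - 1), PadicInt.toZMod (b j) * ((p - 1).choose j) *
        (n : ZMod p) ^ (p - 1 - j) := by
  have h2 := hp.out.two_le
  have h := sum_range_pow n (p - 2)
  rw [show p - 2 + 1 = p - 1 by omega] at h
  have h1 : ((p - 1 : ℕ) : ℚ) ≠ 0 := by
    have : p - 1 ≠ 0 := by omega
    exact_mod_cast this
  have e : ((p - 2 : ℕ) : ℚ) + 1 = ((p - 1 : ℕ) : ℚ) := by
    rw [← Nat.cast_succ]; congr 1; omega
  rw [e, ← Finset.sum_div, eq_div_iff h1] at h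
  have hK := congrArg (fun q : ℚ => (q : ℚ_[p])) h
  have hZ : (∑ i ∈ range n, (i : ℤ_[p]) ^ (p - 2)) * ((p - 1 : ℕ) : ℤ_[p]) =
      ∑ j ∈ range (p - 1), b j * ((p - 1).choose j) * (n : ℤ_[p]) ^ (p - 1 - j) := by
    apply pext
    simp only [PadicInt.coe_mul, PadicInt.coe_sum, PadicInt.coe_pow, PadicInt.coe_natCast]
    push_cast at hK ⊢
    rw [hK]
    refine Finset.sum_congr rfl fun j hj => ?_
    rw [hb j (Finset.mem_range.1 hj)]
  have := congrArg PadicInt.toZMod hZ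
  simp only [map_mul, map_sum, map_pow, map_natCast] at this
  rw [← this, Nat.cast_sub hp.out.one_le]
  simp

lemma Sk_two_bern (h11 : 11 ≤ p) (b : ℤ_[p])
    (hb : (b : ℚ_[p]) = ((_root_.bernoulli (p - 3) : ℚ) : ℚ_[p])) :
    PadicInt.toZMod (Sk p 2) = 40 * (PadicInt.toZMod b) ^ 2 := by
  obtain ⟨c, hc⟩ := bern_exists (p := p)
  have h1 := es_sum _ (bern_faul c hc) 1 (by omega)
  have h4 := es_sum _ (bern_faul c hc) 4 (by omega)
  rw [Sk_two_mod h11, h1, h4]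
  have e1 : c (p - 2 - 1) = b := by
    apply pext
    rw [hc _ (by omega), hb]; congr 2
  have e4 : c (p - 2 - 4) = 0 := by
    apply pext
    have : Odd (p - 2 - 4) := by
      have := hp.out.odd_of_ne_two (by omega)
      rw [Nat.odd_iff] at this ⊢
      omega
    rw [hc _ (by omega), bernoulli_eq_zero_of_odd this (by omega)]
    simp
  rw [e1, e4]
  have hch : (((p - 1).choose (p - 2 - 1) : ℕ) : ZMod p) = 1 := by
    have h2 : (p - 1).choose (p - 2 - 1) = (p - 1).choose 2 := by
      rw [← Nat.choose_symm (show 2 ≤ p - 1 by omega)]; congr 1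
    rw [h2]
    have h3 : 2 * (p - 1).choose 2 = (p - 1) * (p - 2) := by
      rw [Nat.choose_two_right, Nat.mul_div_cancel' (Nat.even_mul_pred_self _).two_dvd]
      rfl
    have h5 := congrArg (fun n : ℕ => (n : ZMod p)) h3
    simp only [Nat.cast_mul] at h5
    rw [Nat.cast_sub (show 1 ≤ p by omega), Nat.cast_sub (show 2 ≤ p by omega)] at h5
    simp only [CharP.cast_eq_zero, Nat.cast_one, Nat.cast_ofNat] at h5
    have h6 : (2 : ZMod p) ≠ 0 := by
      have := cast_ne (p := p) (i := 2) (by omega) (by omega)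
      exact_mod_cast this
    apply mul_left_cancel₀ h6
    rw [h5]; ring
  rw [hch]
  simp

end padic2
end S17

namespace S17
open Finset

section padic3
variable {p : ℕ} [hp : Fact p.Prime]
open Polynomial

/-- reduction of the truncated logarithm -/
noncomputable def Fb (p : ℕ) [Fact p.Prime] : (ZMod p)[X] := (fp p p).map PadicInt.toZMod

lemma Fb_coeff (n : ℕ) : (Fb p).coeff n = if n < p then (n : ZMod p)⁻¹ else 0 := by
  rw [Fb, coeff_map, fp_coeff]
  split_ifs
  · rw [toZMod_iv]
  · simp

lemma Sk_mod (k : ℕ) : PadicInt.toZMod (Sk p k) = (Fb p ^ 6).coeff (k * p) := by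
  rw [Fb, ← Polynomial.map_pow, coeff_map, Sk]

lemma fp_natDegree (B : ℕ) : (fp p B).natDegree ≤ B - 1 := by
  rw [natDegree_le_iff_coeff_eq_zero]
  intro n hn
  rw [fp_coeff, if_neg (by omega)]

lemma Fb_natDegree : (Fb p).natDegree ≤ p - 1 :=
  natDegree_map_le.trans (fp_natDegree p)

lemma reflect_Fb : reflect p (Fb p) = - Fb p := by
  ext n
  rw [coeff_reflect, coeff_neg]
  rcases le_or_gt n p with h | h
  · rw [revAt_le h, Fb_coeff, Fb_coeff]
    rcases Nat.eq_zero_or_pos n with h0 | h0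
    · subst h0; simp
    rw [if_pos (by omega), Nat.cast_sub h]
    split_ifs with h1
    · simp [← neg_inv]
    · have : n = p := by omega
      subst this; simp
  · rw [revAt_eq_self_of_lt h, Fb_coeff, if_neg (by omega)]; simp

lemma reflect_Fb_pow (n : ℕ) : reflect (n * p) (Fb p ^ n) = (- Fb p) ^ n := by
  induction n with
  | zero => simp
  | succ n ih =>
    rw [pow_succ, pow_succ, Nat.succ_mul, reflect_mul, ih, reflect_Fb]
    · refine natDegree_pow_le.trans (Nat.mul_le_mul le_rfl (Fb_natDegree.trans (Nat.sub_le _ _)))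
    · exact Fb_natDegree.trans (Nat.sub_le _ _)

lemma Sk_symm (k : ℕ) (hk : k ≤ 6) :
    PadicInt.toZMod (Sk p (6 - k)) = PadicInt.toZMod (Sk p k) := by
  have h := congrArg (fun f => f.coeff (k * p)) (reflect_Fb_pow (p := p) 6)
  rw [coeff_reflect, revAt_le (Nat.mul_le_mul hk le_rfl), ← Nat.sub_mul] at h
  rw [Even.neg_pow (by decide)] at h
  rw [Sk_mod, Sk_mod, h]

lemma Sk_zero : Sk p 0 = 0 := by
  rw [Sk, zero_mul, coeff_zero_eq_eval_zero, eval_pow, ← coeff_zero_eq_eval_zero, fp_coeff,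
    if_pos hp.out.pos, iv_zero]
  simp

lemma Sk_ge (k : ℕ) (hk : 6 ≤ k) : Sk p k = 0 := by
  rw [Sk]
  apply coeff_eq_zero_of_natDegree_lt
  have h1 : (fp p p ^ 6).natDegree ≤ 6 * (p - 1) :=
    natDegree_pow_le.trans (Nat.mul_le_mul le_rfl (fp_natDegree p))
  have h2 := hp.out.pos
  have h3 : 6 * p ≤ k * p := Nat.mul_le_mul hk le_rfl
  omega

lemma sum_mult {M : Type*} [AddCommMonoid M] (g : ℕ → M) (q : ℕ) (hq : 0 < q) (K : ℕ) :
    ∑ n ∈ range (K * q), (if q ∣ n then g n else 0) = ∑ k ∈ range K, g (k * q) := by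
  induction K with
  | zero => simp
  | succ K ih =>
    rw [Nat.succ_mul, Finset.sum_range_add, ih, Finset.sum_range_succ]
    congr 1
    rw [Finset.sum_eq_single 0]
    · simp
    · intro b hb hb0
      rw [if_neg]
      rw [Nat.dvd_add_right (Dvd.intro_left K rfl)]
      intro h
      have := Nat.le_of_dvd (by omega) h
      have := Finset.mem_range.1 hb
      omega
    · intro h; simp at h; omega

/-- map to the cyclic group algebra -/
noncomputable def cyc (p : ℕ) [Fact p.Prime] :
    (ZMod p)[X] →ₐ[ZMod p] AddMonoidAlgebra (ZMod p) (ZMod p) :=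
  aeval (AddMonoidAlgebra.single (1 : ZMod p) (1 : ZMod p))

lemma cyc_eq (P : (ZMod p)[X]) (N : ℕ) (hN : P.natDegree < N) :
    cyc p P = ∑ n ∈ range N, AddMonoidAlgebra.single (n : ZMod p) (P.coeff n) := by
  rw [cyc, aeval_eq_sum_range' hN]
  refine Finset.sum_congr rfl fun n _ => ?_
  rw [AddMonoidAlgebra.single_pow]
  simp

lemma cyc_coeff (P : (ZMod p)[X]) (K : ℕ) (hN : P.natDegree < K * p) :
    (cyc p P).coeff 0 = ∑ k ∈ range K, P.coeff (k * p) := by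
  rw [cyc_eq P _ hN, ← sum_mult _ p hp.out.pos]
  simp [AddMonoidAlgebra.coeff_sum, Finsupp.finsetSum_apply, Finsupp.single_apply,
    ZMod.natCast_eq_zero_iff]

lemma cyc_Fb : cyc p (Fb p) = ∑ x : ZMod p, AddMonoidAlgebra.single x x⁻¹ := by
  have := hp.out.pos
  have h1 := Fb_natDegree (p := p)
  rw [cyc_eq _ p (by omega)]
  refine Finset.sum_bij (fun n _ => (n : ZMod p)) (fun _ _ => Finset.mem_univ _) ?_ ?_ ?_
  · intro a ha b hb hab
    have ha := Finset.mem_range.1 ha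
    have hb := Finset.mem_range.1 hb
    rw [ZMod.natCast_eq_natCast_iff'] at hab
    rwa [Nat.mod_eq_of_lt ha, Nat.mod_eq_of_lt hb] at hab
  · intro x _
    exact ⟨x.val, Finset.mem_range.2 (ZMod.val_lt x), ZMod.natCast_zmod_val x⟩
  · intro n hn
    rw [Fb_coeff, if_pos (Finset.mem_range.1 hn)]

lemma Sk_total (h11 : 11 ≤ p) : ∑ k ∈ range 6, PadicInt.toZMod (Sk p k) = 0 := by
  have h2 : (2 : ZMod p) ≠ 0 := by
    have := cast_ne (p := p) (i := 2) (by omega) (by omega)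
    exact_mod_cast this
  have h63 : (63 : ZMod p) ≠ 0 := by
    have h3 := cast_ne (p := p) (i := 3) (by omega) (by omega)
    have h7 := cast_ne (p := p) (i := 7) (by omega) (by omega)
    have := mul_ne_zero (mul_ne_zero h3 h3) h7
    norm_num at this
    exact this
  simp only [Sk_mod]
  rw [← cyc_coeff _ 6, map_pow, cyc_Fb]
  swap
  · have h1 : (Fb p ^ 6).natDegree ≤ 6 * (p - 1) :=
      natDegree_pow_le.trans (Nat.mul_le_mul le_rfl Fb_natDegree)
    omega
  set u : AddMonoidAlgebra (ZMod p) (ZMod p) :=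
    ∑ x : ZMod p, AddMonoidAlgebra.single x x⁻¹ with hu
  let dbl : ZMod p →+ ZMod p := AddMonoidHom.mulLeft 2
  have hinj : Function.Injective dbl := fun a b hab => mul_left_cancel₀ h2 hab
  let D := AddMonoidAlgebra.mapDomainRingHom (ZMod p) dbl
  have hD : D u = (2 : ZMod p) • u := by
    rw [hu, map_sum, Finset.smul_sum]
    refine Finset.sum_bij (fun x _ => 2 * x) (fun _ _ => Finset.mem_univ _) ?_ ?_ ?_
    · intro a _ b _ hab
      exact mul_left_cancel₀ h2 hab
    · intro b _
      exact ⟨2⁻¹ * b, Finset.mem_univ _, by rw [mul_inv_cancel_left₀ h2]⟩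
    · intro x _
      simp [D, dbl]
      field_simp
  have h6 : D (u ^ 6) = (64 : ZMod p) • u ^ 6 := by
    rw [map_pow, hD, _root_.smul_pow]; norm_num
  have h0 : (D (u ^ 6)).coeff 0 = (u ^ 6).coeff 0 := by
    have : (D (u ^ 6)).coeff (dbl 0) = (u ^ 6).coeff 0 :=
      Finsupp.mapDomain_apply hinj _ _
    simpa using this
  rw [h6] at h0
  simp only [AddMonoidAlgebra.coeff_smul, Finsupp.smul_apply, smul_eq_mul] at h0
  have : (63 : ZMod p) * (u ^ 6).coeff 0 = 0 := by linear_combination h0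
  exact (mul_eq_zero.1 this).resolve_left h63

/-- the shape of the reductions -/
lemma Sk_shape (h11 : 11 ≤ p) :
    PadicInt.toZMod (Sk p 3) = -2 * PadicInt.toZMod (Sk p 2) ∧
    PadicInt.toZMod (Sk p 4) = PadicInt.toZMod (Sk p 2) ∧
    PadicInt.toZMod (Sk p 5) = 0 := by
  have h1 := Sk_one_mod h11
  have h4 := Sk_symm (p := p) 2 (by omega)
  have h5 := Sk_symm (p := p) 1 (by omega)
  have ht := Sk_total h11
  simp only [Finset.sum_range_succ, Finset.sum_range_zero, Sk_zero, map_zero] at ht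
  norm_num at h4 h5
  refine ⟨?_, h4, h5.trans h1⟩
  rw [h4, h5, h1] at ht
  linear_combination ht

end padic3
end S17

namespace S17
open Finset

section stepA
variable {p : ℕ} [hp : Fact p.Prime]
open Polynomial

lemma sum_split {M : Type*} [AddCommMonoid M] (g : ℕ → M) (q K : ℕ) :
    ∑ n ∈ range (K * q), g n = ∑ a ∈ range K, ∑ x ∈ range q, g (a * q + x) := by
  induction K with
  | zero => simp
  | succ K ih => rw [Nat.succ_mul, Finset.sum_range_add, ih, Finset.sum_range_succ]

lemma iv_shift (a x : ℕ) : iv p (a * p + x) = iv p x - p * (a * iv p x ^ 2) +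
    (p : ℤ_[p]) ^ 2 * (a ^ 2 * iv p x ^ 2 * iv p (a * p + x)) := by
  by_cases h : p ∣ x
  · rw [iv_dvd h, iv_dvd (dvd_add (Dvd.intro_left a rfl) h)]; ring
  · have h1 := iv_mul h
    have h2 := iv_mul (p := p) (l := a * p + x) (by
      rw [Nat.dvd_add_right (Dvd.intro_left a rfl)]; exact h)
    push_cast at h2
    generalize iv p (a * p + x) = j at *
    generalize iv p x = i at *
    linear_combination (i - a * p * i ^ 2) * h2 + (-j + a * p * i * j) * h1

/-- geometric polynomial -/
noncomputable def Ep (p : ℕ) [Fact p.Prime] : ℤ_[p][X] := ∑ a ∈ range p, X ^ a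
/-- weighted geometric polynomial -/
noncomputable def Dp (p : ℕ) [Fact p.Prime] : ℤ_[p][X] := ∑ a ∈ range p, C (a : ℤ_[p]) * X ^ a
/-- truncated dilogarithm -/
noncomputable def f2p (p : ℕ) [Fact p.Prime] : ℤ_[p][X] := ∑ l ∈ range p, C (iv p l ^ 2) * X ^ l

lemma G_eq : ∃ R : ℤ_[p][X], fp p (p ^ 2) = fp p p * expand _ p (Ep p) -
    C (p : ℤ_[p]) * (f2p p * expand _ p (Dp p)) + C (p : ℤ_[p]) ^ 2 * R := by
  refine ⟨∑ a ∈ range p, ∑ x ∈ range p,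
    C (a ^ 2 * iv p x ^ 2 * iv p (a * p + x)) * X ^ (a * p + x), ?_⟩
  rw [fp, pow_two p, sum_split, fp, f2p, Ep, Dp, map_sum, map_sum,
    Finset.sum_mul_sum, Finset.sum_mul_sum, Finset.sum_comm, Finset.mul_sum, Finset.mul_sum,
    Finset.sum_comm (s := range p) (t := range p), ]
  conv_rhs => enter [2]; simp only [Finset.mul_sum]; rw [Finset.sum_comm]
  rw [Finset.sum_comm]
  simp only [Finset.mul_sum]
  rw [← Finset.sum_sub_distrib, ← Finset.sum_add_distrib]
  refine Finset.sum_congr rfl fun x _ => ?_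
  rw [← Finset.sum_sub_distrib, ← Finset.sum_add_distrib]
  refine Finset.sum_congr rfl fun a _ => ?_
  have h := congrArg (C : ℤ_[p] →+* ℤ_[p][X]) (iv_shift a x)
  simp only [map_mul, map_pow, map_add, map_sub, expand_X, expand_C] at h ⊢
  rw [← pow_mul, mul_comm p a, pow_add]
  linear_combination (X ^ (a * p) * X ^ x) * h

lemma six {R : Type*} [CommRing R] (A B q r : R) : ∃ r', (A - q * B + q ^ 2 * r) ^ 6 =
    A ^ 6 - q * (6 * (A ^ 5 * B)) + q ^ 2 * r' := by
  refine ⟨6 * A ^ 5 * r + (-B + q * r) ^ 2 * (15 * A ^ 4 + 20 * A ^ 3 * (q * (-B + q * r)) +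
    15 * A ^ 2 * (q * (-B + q * r)) ^ 2 + 6 * A * (q * (-B + q * r)) ^ 3 +
    (q * (-B + q * r)) ^ 4), ?_⟩
  ring

lemma G6_coeff (n : ℕ) : ∃ r : ℤ_[p], (fp p (p ^ 2) ^ 6).coeff (n * p) =
    (contract p (fp p p ^ 6) * Ep p ^ 6).coeff n -
    p * (contract p (fp p p ^ 5 * f2p p) * (6 * (Ep p ^ 5 * Dp p))).coeff n + (p : ℤ_[p]) ^ 2 * r := by
  have h0 := hp.out.ne_zero
  obtain ⟨R, hR⟩ := G_eq (p := p)
  obtain ⟨R', hR'⟩ := six (fp p p * expand _ p (Ep p)) (f2p p * expand _ p (Dp p))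
    (C (p : ℤ_[p])) R
  refine ⟨R'.coeff (n * p), ?_⟩
  rw [hR, hR', ← contract_mul_expand h0, ← contract_mul_expand h0, coeff_contract h0,
    coeff_contract h0, coeff_add, coeff_sub, coeff_C_mul, ← C_pow, coeff_C_mul]
  have e1 : (fp p p * expand _ p (Ep p)) ^ 6 = fp p p ^ 6 * expand _ p (Ep p ^ 6) := by
    rw [mul_pow, map_pow]
  have e2 : (6 : ℤ_[p][X]) * ((fp p p * expand _ p (Ep p)) ^ 5 * (f2p p * expand _ p (Dp p))) =
      fp p p ^ 5 * f2p p * expand _ p (6 * (Ep p ^ 5 * Dp p)) := by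
    simp only [map_mul, map_pow, map_ofNat]
    ring
  rw [e1, e2]

lemma coeff_mul_six {R : Type*} [CommRing R] (P Q : R[X]) (h : ∀ k, 6 ≤ k → P.coeff k = 0)
    (n : ℕ) (hn : 5 ≤ n) :
    (P * Q).coeff n = ∑ k ∈ range 6, P.coeff k * Q.coeff (n - k) := by
  rw [coeff_mul, Finset.Nat.sum_antidiagonal_eq_sum_range_succ
    (fun i j => P.coeff i * Q.coeff j)]
  symm
  apply Finset.sum_subset
  · intro k hk
    rw [Finset.mem_range] at *
    omega
  · intro k _ hk
    rw [Finset.mem_range, not_lt] at hk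
    rw [h k hk, zero_mul]

lemma D_coeff (n : ℕ) : (6 * (Ep p ^ 5 * Dp p)).coeff n = n * (Ep p ^ 6).coeff n := by
  have hD : Dp p = X * derivative (Ep p) := by
    rw [Dp, Ep, derivative_sum, Finset.mul_sum]
    refine Finset.sum_congr rfl fun a _ => ?_
    rw [derivative_X_pow]
    rcases a with _ | a
    · simp
    · simp [pow_succ]; ring
  have h : (6 : ℤ_[p][X]) * (Ep p ^ 5 * Dp p) = X * derivative (Ep p ^ 6) := by
    have e6 : (C 6 : ℤ_[p][X]) = 6 := map_ofNat C 6
    rw [derivative_pow, hD]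
    simp [e6]
    ring
  rw [h]
  rcases n with _ | n
  · simp
  · rw [coeff_X_mul, coeff_derivative]; push_cast; ring

/-- binomial value -/
noncomputable def Bn (p : ℕ) [Fact p.Prime] (n : ℕ) : ℤ_[p] := ((5 + n).choose 5 : ℕ)

lemma E6_coeff (n : ℕ) (hn : n < 3 * p) : (Ep p ^ 6).coeff n =
    Bn p n - 6 * (if p ≤ n then Bn p (n - p) else 0) +
      15 * (if 2 * p ≤ n then Bn p (n - 2 * p) else 0) := by
  have h1 : Ep p * (1 - X) = 1 - X ^ p := by
    rw [Ep]
    have := geom_sum_mul (X : ℤ_[p][X]) p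
    linear_combination -this
  have h2 : ((Ep p : ℤ_[p][X]) : PowerSeries ℤ_[p]) * (1 - PowerSeries.X) =
      1 - PowerSeries.X ^ p := by
    have := congrArg (fun f : ℤ_[p][X] => (f : PowerSeries ℤ_[p])) h1
    simpa using this
  have h3 : ((Ep p : ℤ_[p][X]) : PowerSeries ℤ_[p]) =
      (1 - PowerSeries.X ^ p) * PowerSeries.mk 1 := by
    rw [← h2, mul_assoc, mul_comm (1 - PowerSeries.X), PowerSeries.mk_one_mul_one_sub_eq_one,
      mul_one]
  have h4 : ((Ep p : ℤ_[p][X]) : PowerSeries ℤ_[p]) ^ 6 =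
      PowerSeries.mk (Bn p) - PowerSeries.C 6 * (PowerSeries.X ^ p * PowerSeries.mk (Bn p)) +
      PowerSeries.C 15 * (PowerSeries.X ^ (2 * p) * PowerSeries.mk (Bn p)) +
      PowerSeries.X ^ (3 * p) * ((-20 + 15 * PowerSeries.X ^ p - 6 * PowerSeries.X ^ (2 * p) +
        PowerSeries.X ^ (3 * p)) * PowerSeries.mk (Bn p)) := by
    rw [h3, mul_pow, PowerSeries.mk_one_pow_eq_mk_choose_add ℤ_[p] 5]
    change _ * PowerSeries.mk (Bn p) = _
    rw [map_ofNat, map_ofNat, mul_comm 2 p, mul_comm 3 p, pow_mul, pow_mul]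
    ring
  rw [← coeff_coe, Polynomial.coe_pow, h4]
  simp only [map_add, map_sub, PowerSeries.coeff_C_mul, PowerSeries.coeff_X_pow_mul',
    PowerSeries.coeff_mk]
  rw [if_neg (show ¬ 3 * p ≤ n by omega), add_zero]

lemma Bn_eq (n : ℕ) : 120 * Bn p n = (n + 5) * (n + 4) * (n + 3) * (n + 2) * (n + 1) := by
  have h := Nat.descFactorial_eq_factorial_mul_choose (5 + n) 5
  have h2 : (5 + n).descFactorial 5 = (n + 5) * (n + 4) * (n + 3) * (n + 2) * (n + 1) := by
    rw [add_comm]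
    simp [Nat.descFactorial_succ]
    ring
  rw [h2] at h
  have := congrArg (fun m : ℕ => (m : ℤ_[p])) h
  simp only [Nat.factorial] at this
  push_cast at this
  rw [Bn, this]

/-- The linear coefficients. -/
def ek (k : ℕ) : ℤ := if k = 1 then 24 else if k = 2 then -6 else if k = 3 then 4 else
  if k = 4 then -6 else if k = 5 then 24 else 0

lemma Bn_mod (j k : ℕ) (h1 : 1 ≤ k) (h5 : k ≤ 5) (hj : k ≤ j * p) :
    ∃ r : ℤ_[p], 120 * Bn p (j * p - k) = ek k * j * p + (p : ℤ_[p]) ^ 2 * r := by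
  rw [Bn_eq, Nat.cast_sub hj, Nat.cast_mul]
  set x : ℤ_[p] := (j : ℤ_[p]) * p with hx
  suffices h : ∃ r, (x - k + 5) * (x - k + 4) * (x - k + 3) * (x - k + 2) * (x - k + 1) =
      ek k * x + x ^ 2 * r by
    obtain ⟨r, hr⟩ := h
    refine ⟨j ^ 2 * r, ?_⟩
    rw [hr, hx]; ring
  interval_cases k
  · refine ⟨50 + 35 * x + 10 * x ^ 2 + x ^ 3, ?_⟩
    simp [ek]; ring
  · refine ⟨-5 + 5 * x + 5 * x ^ 2 + x ^ 3, ?_⟩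
    simp [ek]; ring
  · refine ⟨-5 * x + x ^ 3, ?_⟩
    simp [ek]; ring
  · refine ⟨5 + 5 * x - 5 * x ^ 2 + x ^ 3, ?_⟩
    simp [ek]; ring
  · refine ⟨-50 + 35 * x - 10 * x ^ 2 + x ^ 3, ?_⟩
    simp [ek]; ring

/-- admissible pairs -/
def adm (m : ℕ) (c : ℤ) : Prop := (m = 1 ∧ c = 1) ∨ (m = 2 ∧ c = -4) ∨ (m = 3 ∧ c = 6)

lemma N_mod (h11 : 11 ≤ p) (m : ℕ) (c : ℤ) (hm : adm m c) (k : ℕ) (h1 : 1 ≤ k) (h5 : k ≤ 5) :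
    ∃ r : ℤ_[p], 120 * (Ep p ^ 6).coeff (m * p - k) = ek k * c * p + (p : ℤ_[p]) ^ 2 * r := by
  obtain ⟨r1, hr1⟩ := Bn_mod (p := p) 1 k h1 h5 (by omega)
  obtain ⟨r2, hr2⟩ := Bn_mod (p := p) 2 k h1 h5 (by omega)
  obtain ⟨r3, hr3⟩ := Bn_mod (p := p) 3 k h1 h5 (by omega)
  push_cast at hr1 hr2 hr3
  rcases hm with ⟨rfl, rfl⟩ | ⟨rfl, rfl⟩ | ⟨rfl, rfl⟩
  · rw [E6_coeff _ (by omega), if_neg (by omega), if_neg (by omega)]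
    refine ⟨r1, ?_⟩
    push_cast
    linear_combination hr1
  · rw [E6_coeff _ (by omega), if_pos (by omega), if_neg (by omega),
      show 2 * p - k - p = 1 * p - k by omega]
    refine ⟨r2 - 6 * r1, ?_⟩
    push_cast
    linear_combination hr2 - 6 * hr1
  · rw [E6_coeff _ (by omega), if_pos (by omega), if_pos (by omega),
      show 3 * p - k - p = 2 * p - k by omega, show 3 * p - k - 2 * p = 1 * p - k by omega]
    refine ⟨r3 - 6 * r2 + 15 * r1, ?_⟩
    push_cast
    linear_combination hr3 - 6 * hr2 + 15 * hr1

lemma main_Z (h11 : 11 ≤ p) (m : ℕ) (c : ℤ) (hm : adm m c) (b : ℤ_[p])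
    (hb : (b : ℚ_[p]) = ((bernoulli (p - 3) : ℚ) : ℚ_[p])) :
    ∃ z : ℤ_[p], 120 * (fp p (p ^ 2) ^ 6).coeff (m * p ^ 2) =
      -800 * c * p * b ^ 2 + (p : ℤ_[p]) ^ 2 * z := by
  have h0 := hp.out.ne_zero
  have hmp : 5 ≤ m * p := by
    rcases hm with ⟨rfl, rfl⟩ | ⟨rfl, rfl⟩ | ⟨rfl, rfl⟩ <;> omega
  obtain ⟨r, hr⟩ := G6_coeff (p := p) (m * p)
  rw [mul_assoc, ← pow_two] at hr
  rw [hr, coeff_mul_six _ _ (fun k hk => by rw [coeff_contract h0]; exact Sk_ge k hk) _ hmp,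
    coeff_mul_six _ _ _ _ hmp]
  swap
  · intro k hk
    rw [coeff_contract h0]
    apply coeff_eq_zero_of_natDegree_lt
    have h1 : (fp p p ^ 5).natDegree ≤ 5 * (p - 1) :=
      natDegree_pow_le.trans (Nat.mul_le_mul le_rfl (fp_natDegree p))
    have h4 : (f2p p).natDegree ≤ p - 1 := by
      rw [f2p]
      apply natDegree_sum_le_of_forall_le
      intro i hi
      have := Finset.mem_range.1 hi
      exact (natDegree_C_mul_X_pow_le _ _).trans (by omega)
    have h5 : (fp p p ^ 5 * f2p p).natDegree ≤ 5 * (p - 1) + (p - 1) :=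
      natDegree_mul_le.trans (add_le_add h1 h4)
    have h2 := hp.out.pos
    have h3 : 6 * p ≤ k * p := Nat.mul_le_mul hk le_rfl
    omega
  simp only [coeff_contract h0, D_coeff]
  have hz : (fp p p ^ 5 * f2p p).coeff (0 * p) = 0 := by
    rw [zero_mul, mul_coeff_zero, pow_succ, mul_coeff_zero, fp_coeff, if_pos hp.out.pos, iv_zero]
    simp
  have hS : ∀ k, (fp p p ^ 6).coeff (k * p) = Sk p k := fun _ => rfl
  simp only [Finset.sum_range_succ, Finset.sum_range_zero, hz, hS, Sk_zero]
  obtain ⟨r1, hr1⟩ := N_mod h11 m c hm 1 (by omega) (by omega)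
  obtain ⟨r2, hr2⟩ := N_mod h11 m c hm 2 (by omega) (by omega)
  obtain ⟨r3, hr3⟩ := N_mod h11 m c hm 3 (by omega) (by omega)
  obtain ⟨r4, hr4⟩ := N_mod h11 m c hm 4 (by omega) (by omega)
  obtain ⟨r5, hr5⟩ := N_mod h11 m c hm 5 (by omega) (by omega)
  have hT : (p : ℤ_[p]) ∣ 24 * Sk p 1 - 6 * Sk p 2 + 4 * Sk p 3 - 6 * Sk p 4 + 24 * Sk p 5
      + 800 * b ^ 2 := by
    rw [← toZMod_eq_zero_iff]
    obtain ⟨s3, s4, s5⟩ := Sk_shape h11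
    simp only [map_add, map_sub, map_mul, map_pow, map_ofNat, s3, s4, s5, Sk_one_mod h11,
      Sk_two_bern h11 b hb]
    ring
  obtain ⟨y, hy⟩ := hT
  norm_num [ek] at hr1 hr2 hr3 hr4 hr5
  generalize (Ep p ^ 6).coeff (m * p - 1) = n1 at *
  generalize (Ep p ^ 6).coeff (m * p - 2) = n2 at *
  generalize (Ep p ^ 6).coeff (m * p - 3) = n3 at *
  generalize (Ep p ^ 6).coeff (m * p - 4) = n4 at *
  generalize (Ep p ^ 6).coeff (m * p - 5) = n5 at *
  generalize (fp p p ^ 5 * f2p p).coeff (1 * p) = q1 at *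
  generalize (fp p p ^ 5 * f2p p).coeff (2 * p) = q2 at *
  generalize (fp p p ^ 5 * f2p p).coeff (3 * p) = q3 at *
  generalize (fp p p ^ 5 * f2p p).coeff (4 * p) = q4 at *
  generalize (fp p p ^ 5 * f2p p).coeff (5 * p) = q5 at *
  generalize ((m * p - 1 : ℕ) : ℤ_[p]) = t1 at *
  generalize ((m * p - 2 : ℕ) : ℤ_[p]) = t2 at *
  generalize ((m * p - 3 : ℕ) : ℤ_[p]) = t3 at *
  generalize ((m * p - 4 : ℕ) : ℤ_[p]) = t4 at *
  generalize ((m * p - 5 : ℕ) : ℤ_[p]) = t5 at *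
  refine ⟨c * y + (Sk p 1 * r1 + Sk p 2 * r2 + Sk p 3 * r3 + Sk p 4 * r4 + Sk p 5 * r5) -
    (q1 * t1 * (24 * c + p * r1) + q2 * t2 * (-6 * c + p * r2) + q3 * t3 * (4 * c + p * r3) +
      q4 * t4 * (-6 * c + p * r4) + q5 * t5 * (24 * c + p * r5)) + 120 * r, ?_⟩
  linear_combination (c * p : ℤ_[p]) * hy + (Sk p 1 - p * q1 * t1) * hr1 +
    (Sk p 2 - p * q2 * t2) * hr2 + (Sk p 3 - p * q3 * t3) * hr3 +
    (Sk p 4 - p * q4 * t4) * hr4 + (Sk p 5 - p * q5 * t5) * hr5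

lemma coe_prod' {ι : Type*} (s : Finset ι) (g : ι → ℤ_[p]) :
    ((∏ i ∈ s, g i : ℤ_[p]) : ℚ_[p]) = ∏ i ∈ s, (g i : ℚ_[p]) :=
  map_prod PadicInt.Coe.ringHom g s

lemma S6_coe (B N : ℕ) : ((∑ l ∈ (Fintype.piFinset fun _ : Fin 6 => Finset.Ico 1 B) |>.filter
      (fun l => ∑ i, l i = N ∧ ∀ i, ¬ p ∣ l i), ∏ i, (1 : ℚ) / l i : ℚ) : ℚ_[p]) =
    (((fp p B ^ 6).coeff N : ℤ_[p]) : ℚ_[p]) := by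
  have h : fp p B ^ 6 = ∏ _i : Fin 6, ∑ l ∈ range B, C (iv p l) * X ^ l := by
    simp [fp]
  rw [h, Finset.prod_univ_sum, finsetSum_coeff, PadicInt.coe_sum, Rat.cast_sum]
  apply Finset.sum_subset_zero_on_sdiff
  · intro l hl
    simp only [Finset.mem_filter, Fintype.mem_piFinset, Finset.mem_Ico, Finset.mem_range] at hl ⊢
    exact fun i => (hl.1 i).2
  · intro l hl
    simp only [Finset.mem_sdiff, Finset.mem_filter, Fintype.mem_piFinset, Finset.mem_Ico,
      Finset.mem_range] at hl
    rw [Finset.prod_mul_distrib, Finset.prod_pow_eq_pow_sum, ← map_prod, coeff_C_mul, coeff_X_pow]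
    split_ifs with hN
    · have : ∃ i, p ∣ l i := by
        by_contra hcon
        push Not at hcon
        refine hl.2 ⟨fun i => ⟨?_, hl.1 i⟩, hN.symm, hcon⟩
        rcases Nat.eq_zero_or_pos (l i) with h0 | h0
        · exact absurd (h0 ▸ dvd_zero p) (hcon i)
        · exact h0
      obtain ⟨i, hi⟩ := this
      rw [Finset.prod_eq_zero (Finset.mem_univ i) (iv_dvd hi)]
      simp
    · simp
  · intro l hl
    simp only [Finset.mem_filter] at hl
    rw [Finset.prod_mul_distrib, Finset.prod_pow_eq_pow_sum, ← map_prod, coeff_C_mul, coeff_X_pow,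
      if_pos hl.2.1.symm, mul_one, coe_prod', Rat.cast_prod]
    refine Finset.prod_congr rfl fun i _ => ?_
    rw [coe_iv (hl.2.2 i)]
    push_cast
    rfl

lemma final (h11 : 11 ≤ p) (m : ℕ) (c : ℤ) (hm : adm m c) (S y : ℚ)
    (hS : (S : ℚ_[p]) = (((fp p (p ^ 2) ^ 6).coeff (m * p ^ 2) : ℤ_[p]) : ℚ_[p]))
    (hy : 120 * y = -800 * c * p * _root_.bernoulli (p - 3) ^ 2) :
    ∃ z : ℚ, S - y = (p : ℚ) ^ 2 * z ∧ ¬ (p ∣ z.den) := by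
  have hp0 : (p : ℚ) ≠ 0 := by exact_mod_cast hp.out.ne_zero
  refine ⟨(S - y) / p ^ 2, by field_simp, ?_⟩
  obtain ⟨b, hb⟩ : ∃ b : ℤ_[p], (b : ℚ_[p]) = ((_root_.bernoulli (p - 3) : ℚ) : ℚ_[p]) :=
    ⟨⟨_, bern_norm (p - 3) (by omega)⟩, rfl⟩
  obtain ⟨z, hz⟩ := main_Z h11 m c hm b hb
  rw [← Rat.padicValuation_le_one_iff, ← Padic.norm_rat_le_one_iff_padicValuation_le_one]
  have hK := congrArg (fun x : ℤ_[p] => (x : ℚ_[p])) hz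
  have hyK := congrArg (fun x : ℚ => (x : ℚ_[p])) hy
  have e120 : ((120 : ℤ_[p]) : ℚ_[p]) = 120 := coe_ofNat' 120
  have e800 : ((800 : ℤ_[p]) : ℚ_[p]) = 800 := coe_ofNat' 800
  push_cast at hK hyK
  rw [e120, e800, ← hS, hb] at hK
  have hpK := pK_ne (p := p)
  have h1 : (120 : ℚ_[p]) * (((S - y) / p ^ 2 : ℚ) : ℚ_[p]) = z := by
    push_cast
    field_simp
    linear_combination hK - hyK
  have h120 : ‖(120 : ℚ_[p])‖ = 1 := by
    have : ‖((120 : ℕ) : ℚ_[p])‖ = 1 := by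
      rw [Padic.norm_natCast_eq_one_iff, Nat.Prime.coprime_iff_not_dvd hp.out]
      intro h
      rw [show 120 = 2 ^ 3 * 3 * 5 by norm_num, hp.out.dvd_mul, hp.out.dvd_mul] at h
      rcases h with (h | h) | h
      · have := Nat.le_of_dvd (by omega) (hp.out.dvd_of_dvd_pow h); omega
      · have := Nat.le_of_dvd (by omega) h; omega
      · have := Nat.le_of_dvd (by omega) h; omega
    exact_mod_cast this
  have h2 := congrArg norm h1
  rw [norm_mul, h120, one_mul] at h2
  rw [h2]
  exact z.2

end stepA
end S17

theorem stmt_17 (p : ℕ) (hp : p.Prime) (hp11 : 11 ≤ p) :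
    ratCong p 2 (S6 p (p ^ 2) (1 * p ^ 2)) (-(20 / 3 : ℚ) * p * bernoulli (p - 3) ^ 2) ∧
    ratCong p 2 (S6 p (p ^ 2) (2 * p ^ 2)) ((80 / 3 : ℚ) * p * bernoulli (p - 3) ^ 2) ∧
    ratCong p 2 (S6 p (p ^ 2) (3 * p ^ 2)) (-(40 : ℚ) * p * bernoulli (p - 3) ^ 2) := by
  haveI : Fact p.Prime := ⟨hp⟩
  refine ⟨?_, ?_, ?_⟩
  · refine S17.final hp11 1 1 (Or.inl ⟨rfl, rfl⟩) _ _ (S17.S6_coe _ _) ?_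
    push_cast
    ring
  · refine S17.final hp11 2 (-4) (Or.inr (Or.inl ⟨rfl, rfl⟩)) _ _ (S17.S6_coe _ _) ?_
    push_cast
    ring
  · refine S17.final hp11 3 6 (Or.inr (Or.inr ⟨rfl, rfl⟩)) _ _ (S17.S6_coe _ _) ?_
    push_cast
    ring
end

section
/- For any prime p > 10, the sum of 1/(l_1⋯l_{10}) over all 10-tuples of positive integers with l_1+⋯+l_{10} = 2p and each l_i coprime to p is congruent modulo p to (10!/1050)·(50·B_{p-3}·B_{p-7} + 21·B_{p-5}²). -/
/-- Sum of `1/(l₁⋯lₙ)` over positive `n`-tuples summing to `N` with each `lᵢ` coprime to `p`. -/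
def hsum (p n N : ℕ) : ℚ :=
  ∑ l ∈ (Fintype.piFinset fun _ : Fin n => Finset.Icc 1 N) |>.filter
      (fun l => ∑ i, l i = N ∧ ∀ i, ¬ p ∣ l i),
    ∏ i, (1 : ℚ) / l i


/-- The power series `-log(1-x)`. -/
noncomputable def lamS : PowerSeries ℚ := PowerSeries.mk fun n => (1 : ℚ) / n

/-- The part of `-log(1-x)` with exponents divisible by `p`. -/
noncomputable def mulS (p : ℕ) : PowerSeries ℚ :=
  PowerSeries.mk fun n => if p ∣ n then (1 : ℚ) / n else 0

lemma hsum_eq_coeff (p n N : ℕ) :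
    hsum p n N = PowerSeries.coeff N ((lamS - mulS p) ^ n) := by
  have h1 : (lamS - mulS p) ^ n = ∏ _i : Fin n, (lamS - mulS p) := by simp
  rw [h1, PowerSeries.coeff_prod]
  have hc : ∀ k, PowerSeries.coeff k (lamS - mulS p) = if p ∣ k then 0 else (1 : ℚ) / k := by
    intro k
    simp only [lamS, mulS, map_sub, PowerSeries.coeff_mk]
    split_ifs <;> simp
  simp only [hc]
  unfold hsum
  symm
  rw [← Finset.sum_filter_add_sum_filter_not _ (fun l : Fin n →₀ ℕ => ∀ i, ¬ p ∣ l i)]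
  have h0 : ∑ l ∈ (Finset.finsuppAntidiag Finset.univ N).filter
      (fun l : Fin n →₀ ℕ => ¬ ∀ i, ¬ p ∣ l i),
      ∏ i, (if p ∣ l i then 0 else (1 : ℚ) / (l i : ℕ)) = 0 := by
    apply Finset.sum_eq_zero
    intro l hl
    simp only [Finset.mem_filter, not_forall, not_not] at hl
    obtain ⟨_, i, hi⟩ := hl
    exact Finset.prod_eq_zero (Finset.mem_univ i) (by simp [hi])
  rw [h0, add_zero]
  refine Finset.sum_nbij (fun l => (l : Fin n → ℕ)) ?_ ?_ ?_ ?_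
  · intro l hl
    simp only [Finset.mem_filter, Finset.mem_finsuppAntidiag] at hl
    simp only [Finset.mem_filter, Fintype.mem_piFinset, Finset.mem_Icc]
    refine ⟨fun i => ⟨?_, ?_⟩, hl.1.1, hl.2⟩
    · rcases Nat.eq_zero_or_pos (l i) with h | h
      · exact absurd (h ▸ dvd_zero p) (hl.2 i)
      · exact h
    · rw [← hl.1.1]
      exact Finset.single_le_sum (f := fun i => l i) (fun _ _ => Nat.zero_le _) (Finset.mem_univ i)
  · intro a _ b _ h
    exact DFunLike.coe_injective h
  · intro l hl
    simp only [Finset.coe_filter, Set.mem_ofPred_eq, Fintype.mem_piFinset] at hl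
    refine ⟨Finsupp.equivFunOnFinite.symm l, ?_, by ext; simp⟩
    simp only [Finset.coe_filter, Set.mem_ofPred_eq, Finset.mem_finsuppAntidiag]
    exact ⟨⟨by simpa using hl.2.1, Finset.subset_univ _⟩, by simpa using hl.2.2⟩
  · intro l hl
    simp only [Finset.mem_filter] at hl
    exact Finset.prod_congr rfl fun i _ => by simp [hl.2 i]

lemma coeff_lamS_pow_zero (n : ℕ) (hn : n ≠ 0) : PowerSeries.coeff 0 (lamS ^ n) = 0 := by
  simp [lamS, hn]

lemma lamS_rec (n N : ℕ) :
    ((N : ℚ) + 1) * PowerSeries.coeff (N + 1) (lamS ^ (n + 1))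
      = N * PowerSeries.coeff N (lamS ^ (n + 1)) + (n + 1) * PowerSeries.coeff N (lamS ^ n) := by
  have hd : PowerSeries.derivative ℚ lamS = PowerSeries.mk 1 := by
    ext k
    rw [PowerSeries.coeff_derivative]
    simp only [lamS, PowerSeries.coeff_mk, Pi.one_apply]
    push_cast
    field_simp
  have h1 : (1 - PowerSeries.X) * PowerSeries.derivative ℚ (lamS ^ (n + 1))
      = ((n + 1 : ℕ) : PowerSeries ℚ) * lamS ^ n := by
    rw [PowerSeries.derivative_pow, hd]
    have := PowerSeries.mk_one_mul_one_sub_eq_one ℚ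
    calc _ = ((n + 1 : ℕ) : PowerSeries ℚ) * lamS ^ n *
        (PowerSeries.mk 1 * (1 - PowerSeries.X)) := by
          simp only [Nat.add_sub_cancel]; ring
      _ = _ := by rw [this, mul_one]
  have h2 := congrArg (PowerSeries.coeff N) h1
  have hc : ((n + 1 : ℕ) : PowerSeries ℚ) = PowerSeries.C ((n + 1 : ℕ) : ℚ) := by simp
  rw [hc, PowerSeries.coeff_C_mul, sub_mul, one_mul, map_sub, PowerSeries.coeff_derivative] at h2
  rcases N with _ | N
  · simp at h2 ⊢
    linarith
  · rw [PowerSeries.coeff_succ_X_mul, PowerSeries.coeff_derivative] at h2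
    push_cast at h2 ⊢
    linarith

lemma coeff_lamS_pow (N n : ℕ) :
    (N.factorial : ℚ) * PowerSeries.coeff N (lamS ^ n)
      = n.factorial * (ascPochhammer ℚ N).coeff n := by
  induction N generalizing n with
  | zero =>
    rcases n with _ | n
    · simp
    · simp [Polynomial.coeff_one, lamS]
  | succ N ih =>
    rcases n with _ | n
    · simp [PowerSeries.coeff_one, ascPochhammer_succ_left]
    · have h := lamS_rec n N
      have i1 := ih (n + 1)
      have i2 := ih n
      rw [ascPochhammer_succ_right, mul_add, Polynomial.coeff_add, Polynomial.coeff_mul_X,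
        ← Polynomial.C_eq_natCast, Polynomial.coeff_mul_C]
      rw [Nat.factorial_succ] at i1 ⊢
      rw [Nat.factorial_succ n]
      push_cast at *
      linear_combination (N.factorial : ℚ) * h + N * i1 + (n + 1) * i2

lemma hsum_formula (p : ℕ) (hp : 0 < p) :
    hsum p 10 (2 * p) = PowerSeries.coeff (2 * p) (lamS ^ 10)
      - 10 / p * PowerSeries.coeff p (lamS ^ 9) := by
  rw [hsum_eq_coeff]
  have hX : PowerSeries.X ∣ lamS := by
    rw [PowerSeries.X_dvd_iff]; simp [lamS]
  have hM : PowerSeries.X ^ p ∣ mulS p := by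
    rw [PowerSeries.X_pow_dvd_iff]
    intro m hm
    simp only [mulS, PowerSeries.coeff_mk]
    split_ifs with h
    · rcases Nat.eq_zero_or_pos m with h0 | h0
      · simp [h0]
      · exact absurd (Nat.le_of_dvd h0 h) (by omega)
    · rfl
  obtain ⟨u, hu⟩ := hX
  obtain ⟨v, hv⟩ := hM
  have key : ∃ K, (lamS - mulS p) ^ 10 = lamS ^ 10 - PowerSeries.C (10 : ℚ) * (lamS ^ 9 * mulS p)
      + PowerSeries.X ^ (2 * p + 1) * K := by
    have e : PowerSeries.C (10 : ℚ) = 10 := map_ofNat _ 10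
    rw [e]
    obtain ⟨q, rfl⟩ : ∃ q, p = q + 1 := ⟨p - 1, by omega⟩
    set x : PowerSeries ℚ := PowerSeries.X
    set L := lamS
    set M := mulS (q + 1)
    refine ⟨v ^ 2 * (u * (45 * L ^ 7 - 120 * L ^ 6 * M + 210 * L ^ 5 * M ^ 2 - 252 * L ^ 4 * M ^ 3
      + 210 * L ^ 3 * M ^ 4 - 120 * L ^ 2 * M ^ 5 + 45 * L * M ^ 6 - 10 * M ^ 7)
      + x ^ q * v * M ^ 7), ?_⟩
    have e2 : ∀ K, x ^ (2 * (q + 1) + 1) * (v ^ 2 * (u * K + x ^ q * v * M ^ 7))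
        = M ^ 2 * L * K + M ^ 2 * (x ^ (q + 1) * v) * M ^ 7 := by
      intro K
      rw [hu, show M ^ 2 = (x ^ (q + 1) * v) ^ 2 by rw [← hv]]
      ring
    rw [e2, ← hv]
    ring
  obtain ⟨K, hK⟩ := key
  rw [hK, map_add, map_sub, PowerSeries.coeff_C_mul]
  have z : PowerSeries.coeff (2 * p) (PowerSeries.X ^ (2 * p + 1) * K) = 0 := by
    rw [PowerSeries.coeff_X_pow_mul']; simp
  rw [z, add_zero, PowerSeries.coeff_mul]
  have hs : ∑ q ∈ Finset.HasAntidiagonal.antidiagonal (2 * p), PowerSeries.coeff q.1 (lamS ^ 9) *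
      PowerSeries.coeff q.2 (mulS p) = PowerSeries.coeff p (lamS ^ 9) * (1 / p) := by
    rw [Finset.sum_eq_single (p, p)]
    · simp [mulS]
    · rintro ⟨a, b⟩ hab hne
      rw [Finset.HasAntidiagonal.mem_antidiagonal] at hab
      simp only [mulS, PowerSeries.coeff_mk]
      split_ifs with hd
      · obtain ⟨c, rfl⟩ := hd
        have hc : c ≤ 2 := by
          by_contra hc
          have : p * 3 ≤ p * c := Nat.mul_le_mul_left _ (by omega)
          omega
        interval_cases c
        · simp
        · exfalso; apply hne; ext <;> simp <;> omega
        · have : a = 0 := by omega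
          subst this
          rw [coeff_lamS_pow_zero 9 (by norm_num), zero_mul]
      · simp
    · intro h; exfalso; apply h; rw [Finset.HasAntidiagonal.mem_antidiagonal]; ring
  rw [hs]
  ring

/-- Rationals with denominator prime to `p`. -/
def zloc (p : ℕ) (hp : p.Prime) : Subring ℚ where
  carrier := {x | ¬ p ∣ x.den}
  mul_mem' := fun {a b} ha hb h => by
    rcases (hp.dvd_mul).1 (h.trans (Rat.mul_den_dvd a b)) with h | h
    · exact ha h
    · exact hb h
  one_mem' := by
    intro h
    exact hp.one_lt.ne' (by simpa using h)
  add_mem' := fun {a b} ha hb h => by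
    rcases (hp.dvd_mul).1 (h.trans (Rat.add_den_dvd a b)) with h | h
    · exact ha h
    · exact hb h
  zero_mem' := by
    intro h
    exact hp.one_lt.ne' (by simpa using h)
  neg_mem' := fun {a} ha => by
    intro h
    exact ha (by simpa using h)

lemma inv_mem_zloc (p : ℕ) (hp : p.Prime) (n : ℤ) (hn : ¬ (p : ℤ) ∣ n) :
    ((n : ℚ))⁻¹ ∈ zloc p hp := by
  intro h
  apply hn
  have h2 : (((n : ℚ)⁻¹).den : ℤ) ∣ n := by
    have := Rat.den_dvd 1 n
    rwa [Rat.divInt_eq_div, Int.cast_one, one_div] at this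
  exact (Int.natCast_dvd_natCast.2 h).trans h2

/-- The polynomial `(y+1)(y+2)⋯(y+p-1)`. -/
noncomputable def fpol (p : ℕ) : Polynomial ℤ :=
  (ascPochhammer ℤ (p - 1)).comp (Polynomial.X + 1)

section

open Polynomial

lemma X_mul_fpol (p : ℕ) (hp : 0 < p) : X * fpol p = ascPochhammer ℤ p := by
  obtain ⟨q, rfl⟩ : ∃ q, p = q + 1 := ⟨p - 1, by omega⟩
  rw [ascPochhammer_succ_left]; rfl

lemma fpol_shift (p : ℕ) (hp : 0 < p) :
    (X + 1) * (fpol p).comp (X + 1) = (X + (p : ℤ[X])) * fpol p := by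
  have h : (ascPochhammer ℤ p).comp (X + 1) = (X + 1) * (fpol p).comp (X + 1) := by
    rw [← X_mul_fpol p hp]; simp
  rw [← h]
  obtain ⟨q, rfl⟩ : ∃ q, p = q + 1 := ⟨p - 1, by omega⟩
  rw [ascPochhammer_succ_right, mul_comp, fpol]
  simp
  ring

lemma asc_zmod (p : ℕ) [Fact p.Prime] : ascPochhammer (ZMod p) p = X ^ p - X := by
  have hp : p.Prime := Fact.out
  have hm := monic_ascPochhammer (ZMod p) p
  have hm2 : (X ^ p - X : (ZMod p)[X]).Monic := monic_X_pow_sub (by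
    rw [degree_X]; exact_mod_cast hp.one_lt)
  have hd : (ascPochhammer (ZMod p) p).degree = p := by
    rw [degree_eq_natDegree hm.ne_zero, ascPochhammer_natDegree]
  have hd2 : (X ^ p - X : (ZMod p)[X]).degree = p := by
    rw [degree_eq_natDegree hm2.ne_zero, FiniteField.X_pow_card_sub_X_natDegree_eq _ hp.one_lt]
  refine Polynomial.eq_of_degree_sub_lt_of_eval_finset_eq Finset.univ ?_ ?_
  · rw [Finset.card_univ, ZMod.card]
    calc _ < (ascPochhammer (ZMod p) p).degree :=
          degree_sub_lt_left (hd.trans hd2.symm) hm.ne_zero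
            (hm.leadingCoeff.trans hm2.leadingCoeff.symm)
      _ = _ := hd
  · intro x _
    have hx : x = -(((-x).val : ℕ) : ZMod p) := by simp
    simp only [eval_sub, eval_pow, eval_X, ZMod.pow_card, sub_self]
    rw [hx]
    exact ascPochhammer_eval_neg_coe_nat_of_lt (ZMod.val_lt _)

lemma fpol_zmod (p : ℕ) [Fact p.Prime] :
    (fpol p).map (Int.castRingHom (ZMod p)) = X ^ (p - 1) - 1 := by
  have hp : p.Prime := Fact.out
  have h := congrArg (Polynomial.map (Int.castRingHom (ZMod p))) (X_mul_fpol p hp.pos)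
  rw [ascPochhammer_map, asc_zmod, Polynomial.map_mul, map_X] at h
  apply mul_left_cancel₀ (X_ne_zero (R := ZMod p))
  rw [h, mul_sub, mul_one, ← pow_succ', Nat.sub_add_cancel hp.one_le]

lemma fpol_coeff_mod (p : ℕ) (hp : p.Prime) (k : ℕ) :
    (p : ℤ) ∣ (fpol p - X ^ (p - 1) + 1).coeff k := by
  have := Fact.mk hp
  rw [← ZMod.intCast_zmod_eq_zero_iff_dvd]
  have h : (fpol p - X ^ (p - 1) + 1).map (Int.castRingHom (ZMod p)) = 0 := by
    simp [fpol_zmod]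
  have h2 := congrArg (fun P => coeff P k) h
  simpa only [coeff_map, eq_intCast, coeff_zero] using h2

lemma fpol_natDegree (p : ℕ) : (fpol p).natDegree = p - 1 := by
  have : (X + 1 : ℤ[X]) = X + C 1 := by simp
  rw [fpol, this, natDegree_comp, ascPochhammer_natDegree, natDegree_X_add_C, mul_one]

/-- Coefficients of `U` from those of its difference. -/
lemma coeff_of_diff (p : ℕ) (hp : p.Prime) (U : ℚ[X]) (d : ℕ) (hd : d < p)
    (hU : U.natDegree ≤ d) (c : ℚ)
    (h : ∀ i, ∃ z ∈ zloc p hp, (U.comp (X + 1) - U).coeff i = c * z) :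
    ∀ m, 1 ≤ m → ∃ z ∈ zloc p hp, U.coeff m = c * z := by
  have hsum : ∀ i, (U.comp (X + 1) - U).coeff i
      = ∑ m ∈ Finset.Ioc i d, U.coeff m * (m.choose i : ℚ) := by
    intro i
    have e1 : U.comp (X + 1) = ∑ m ∈ Finset.range (d + 1), C (U.coeff m) * (X + 1) ^ m := by
      rw [comp, eval₂_eq_sum_range' C (Nat.lt_succ_of_le hU)]
    rw [coeff_sub, e1, finsetSum_coeff]
    simp only [coeff_C_mul, coeff_X_add_one_pow]
    have e3 : ∑ m ∈ Finset.range (d + 1), U.coeff m * (m.choose i : ℚ)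
        = ∑ m ∈ Finset.Icc i d, U.coeff m * (m.choose i : ℚ) := by
      symm
      apply Finset.sum_subset
      · intro m hm; simp at hm ⊢; omega
      · intro m hm hm2
        simp at hm hm2
        rw [Nat.choose_eq_zero_of_lt (by by_contra hh; have := hm2 (by omega); omega)]
        simp
    rw [e3]
    by_cases hid : i ≤ d
    · rw [← Finset.add_sum_Ioc_eq_sum_Icc hid]
      simp
    · rw [Finset.Icc_eq_empty (by omega), Finset.Ioc_eq_empty (by omega),
        coeff_eq_zero_of_natDegree_lt (by omega)]
      simp
  have main : ∀ n m, 1 ≤ m → d < m + n → ∃ z ∈ zloc p hp, U.coeff m = c * z := by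
    intro n
    induction n with
    | zero =>
      intro m _ hmd
      refine ⟨0, zero_mem _, ?_⟩
      rw [coeff_eq_zero_of_natDegree_lt (by omega), mul_zero]
    | succ n ih =>
      intro m hm hmd
      by_cases hmd2 : d < m
      · exact ih m hm (by omega)
      obtain ⟨i, rfl⟩ : ∃ i, m = i + 1 := ⟨m - 1, by omega⟩
      obtain ⟨z, hz, hz2⟩ := h i
      rw [hsum i, ← Finset.Icc_succ_left_eq_Ioc, Nat.succ_eq_succ, Nat.succ_eq_add_one,
        ← Finset.add_sum_Ioc_eq_sum_Icc (by omega)] at hz2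
      have hr : ∃ w ∈ zloc p hp,
          ∑ m ∈ Finset.Ioc (i + 1) d, U.coeff m * (m.choose i : ℚ) = c * w := by
        have : ∀ m ∈ Finset.Ioc (i + 1) d, ∃ w ∈ zloc p hp, U.coeff m = c * w := by
          intro m hm
          rw [Finset.mem_Ioc] at hm
          exact ih m (by omega) (by omega)
        choose! w hw hw2 using this
        refine ⟨∑ m ∈ Finset.Ioc (i + 1) d, w m * (m.choose i : ℚ), ?_, ?_⟩
        · exact sum_mem fun m hm => mul_mem (hw m hm) (natCast_mem _ _)
        · rw [Finset.mul_sum]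
          exact Finset.sum_congr rfl fun m hm => by rw [hw2 m hm, mul_assoc]
      obtain ⟨w, hw, hw2⟩ := hr
      rw [hw2, Nat.choose_succ_self_right] at hz2
      have hinv := inv_mem_zloc p hp ((i + 1 : ℕ) : ℤ) (by
        rw [Int.natCast_dvd_natCast]
        intro hh
        have := Nat.le_of_dvd (by omega) hh
        omega)
      refine ⟨(z - w) * (((i + 1 : ℕ) : ℤ) : ℚ)⁻¹, mul_mem (sub_mem hz hw) hinv, ?_⟩
      have : ((i + 1 : ℕ) : ℚ) ≠ 0 := by positivity
      rw [Int.cast_natCast]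
      field_simp
      linarith
  exact fun m hm => main (d + 1) m hm (by omega)

lemma fpol_bernoulli (p : ℕ) (hp : p.Prime) (k : ℕ) (hk : 1 ≤ k) (hkp : k + 1 < p) :
    ∃ z ∈ zloc p hp, ((fpol p).coeff k : ℚ)
      - _root_.bernoulli (p - 1 - k) * (p.choose (k + 1) : ℚ) = (p : ℚ) ^ 2 * z := by
  set g : ℚ[X] := (fpol p).map (Int.castRingHom ℚ) with hg
  set U : ℚ[X] := X * g - Polynomial.bernoulli p + (p : ℚ[X]) * X with hUdef
  have hgs : (X + 1) * g.comp (X + 1) = (X + (p : ℚ[X])) * g := by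
    have := congrArg (Polynomial.map (Int.castRingHom ℚ)) (fpol_shift p hp.pos)
    simpa [Polynomial.map_comp] using this
  have hB : (Polynomial.bernoulli p).comp (X + 1) = Polynomial.bernoulli p
      + (p : ℚ[X]) * X ^ (p - 1) := by
    rw [add_comm X 1, bernoulli_comp_one_add_X, nsmul_eq_mul]
  have hdiff : U.comp (X + 1) - U = (p : ℚ[X]) * (g - X ^ (p - 1) + 1) := by
    simp only [hUdef, add_comp, sub_comp, mul_comp, X_comp, natCast_comp, hB, hgs]
    ring
  have hcU : ∀ m, U.coeff (m + 1) = g.coeff m - (Polynomial.bernoulli p).coeff (m + 1)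
      + if m = 0 then (p : ℚ) else 0 := by
    intro m
    rw [hUdef, coeff_add, coeff_sub, coeff_X_mul, coeff_mul_X, ← C_eq_natCast, coeff_C]
  have hmon : g.coeff (p - 1) = 1 := by
    have h1 : (ascPochhammer ℤ p).coeff p = 1 := by
      have := (monic_ascPochhammer ℤ p).coeff_natDegree
      rwa [ascPochhammer_natDegree] at this
    have h2 : (X * fpol p).coeff (p - 1 + 1) = 1 := by
      rw [X_mul_fpol p hp.pos, Nat.sub_add_cancel hp.one_le, h1]
    rw [coeff_X_mul] at h2
    rw [hg, coeff_map, h2]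
    simp
  have hdeg : U.natDegree ≤ p - 1 := by
    rw [natDegree_le_iff_coeff_eq_zero]
    intro N hN
    obtain ⟨m, rfl⟩ : ∃ m, N = m + 1 := ⟨N - 1, by omega⟩
    rw [hcU, coeff_bernoulli, if_neg (show m ≠ 0 by omega)]
    by_cases hm : m = p - 1
    · subst hm
      have e : p - 1 + 1 = p := by omega
      rw [hmon, e]
      simp
    · rw [if_neg (by omega), hg, coeff_map, coeff_eq_zero_of_natDegree_lt]
      · simp
      · rw [fpol_natDegree]; omega
  have hU := coeff_of_diff p hp U (p - 1) (by have := hp.pos; omega) hdeg ((p : ℚ) ^ 2) ?_ (k + 1)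
    (by omega)
  · obtain ⟨z, hz, hz2⟩ := hU
    refine ⟨z, hz, ?_⟩
    rw [← hz2, hcU, coeff_bernoulli, if_pos (by omega), if_neg (by omega), hg, coeff_map,
      show p - (k + 1) = p - 1 - k by omega]
    simp
  · intro i
    obtain ⟨c, hc⟩ := fpol_coeff_mod p hp i
    refine ⟨(c : ℚ), intCast_mem _ _, ?_⟩
    rw [hdiff]
    have e : (g - X ^ (p - 1) + 1 : ℚ[X])
        = (fpol p - X ^ (p - 1) + 1).map (Int.castRingHom ℚ) := by simp [hg]
    rw [← C_eq_natCast, coeff_C_mul, e, coeff_map, hc]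
    simp
    ring

lemma int_dvd_of_zloc (p : ℕ) (hp : p.Prime) (a : ℤ) (z : ℚ) (hz : z ∈ zloc p hp)
    (h : (a : ℚ) = (p : ℚ) ^ 2 * z) : (p : ℤ) ^ 2 ∣ a := by
  have h1 : a * (z.den : ℤ) = (p : ℤ) ^ 2 * z.num := by
    have hd : (z.den : ℚ) ≠ 0 := by exact_mod_cast z.den_nz
    have h2 : (a : ℚ) * z.den = (p : ℚ) ^ 2 * z.num := by
      rw [h, mul_assoc, Rat.mul_den_eq_num]
    exact_mod_cast h2
  have hc : IsCoprime ((p : ℤ) ^ 2) (z.den : ℤ) := by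
    apply IsCoprime.pow_left
    rw [Nat.isCoprime_iff_coprime]
    exact (Nat.Prime.coprime_iff_not_dvd hp).2 hz
  exact hc.dvd_of_dvd_mul_right ⟨_, h1⟩

lemma fpol_coeff_dvd (p : ℕ) (hp : p.Prime) (k : ℕ) (hk : 1 ≤ k) (hkp : k + 1 < p) :
    (p : ℤ) ∣ (fpol p).coeff k := by
  have h := fpol_coeff_mod p hp k
  rw [coeff_add, coeff_sub, coeff_X_pow, if_neg (by omega), coeff_one, if_neg (by omega)] at h
  simpa using h

lemma fpol_coeff_zero (p : ℕ) (hp : p.Prime) : (p : ℤ) ∣ (fpol p).coeff 0 + 1 := by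
  have h := fpol_coeff_mod p hp 0
  have := hp.two_le
  rw [coeff_add, coeff_sub, coeff_X_pow, if_neg (by omega), coeff_one, if_pos rfl] at h
  simpa using h

lemma fpol_coeff_odd (p : ℕ) (hp : p.Prime) (k : ℕ) (hk : 1 ≤ k) (hkp : k + 3 < p)
    (hodd : Odd k) : (p : ℤ) ^ 2 ∣ (fpol p).coeff k := by
  obtain ⟨z, hz, h⟩ := fpol_bernoulli p hp k hk (by omega)
  have hpo : Odd p := hp.odd_of_ne_two (by omega)
  have ho : Odd (p - 1 - k) := by
    rw [Nat.odd_iff] at *; omega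
  rw [bernoulli_eq_zero_of_odd ho (by omega), zero_mul, sub_zero] at h
  exact int_dvd_of_zloc p hp _ z hz h

lemma choose_pred_mod (p : ℕ) (hp : p.Prime) (k : ℕ) (hk : k < p) :
    (p : ℤ) ∣ ((p - 1).choose k : ℤ) - (-1) ^ k := by
  induction k with
  | zero => simp
  | succ k ih =>
    have h := ih (by omega)
    have h2 : p ∣ p.choose (k + 1) := hp.dvd_choose_self (by omega) hk
    have h3 : p.choose (k + 1) = (p - 1).choose k + (p - 1).choose (k + 1) := by
      conv_lhs => rw [← Nat.sub_add_cancel hp.one_le]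
      rw [Nat.choose_succ_succ]
    have h4 : (p : ℤ) ∣ ((p - 1).choose k : ℤ) + (p - 1).choose (k + 1) := by
      rw [h3] at h2; exact_mod_cast h2
    have h5 := dvd_sub h4 h
    rw [pow_succ]
    have h6 : ((p - 1).choose k : ℤ) + (p - 1).choose (k + 1) - (((p - 1).choose k : ℤ) - (-1) ^ k)
        = ((p - 1).choose (k + 1) : ℤ) - (-1) ^ k * -1 := by ring
    rwa [h6] at h5

lemma bern_cong (p : ℕ) (hp : p.Prime) (k : ℕ) (hk : 1 ≤ k) (hkp : k + 1 < p) (he : Even k) :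
    ∃ h : ℤ, ∃ z ∈ zloc p hp, (fpol p).coeff k = p * h ∧
      _root_.bernoulli (p - 1 - k) = (k + 1) * h + p * z := by
  obtain ⟨h, hh⟩ := fpol_coeff_dvd p hp k hk hkp
  obtain ⟨z, hz, hb⟩ := fpol_bernoulli p hp k hk hkp
  obtain ⟨c, hc⟩ := choose_pred_mod p hp k (by omega)
  rw [he.neg_one_pow] at hc
  have hp0 : (p : ℚ) ≠ 0 := by exact_mod_cast hp.ne_zero
  have hC : (p.choose (k + 1) : ℚ) * (k + 1) = p * (p - 1).choose k := by
    have := Nat.add_one_mul_choose_eq (p - 1) k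
    rw [Nat.sub_add_cancel hp.one_le] at this
    exact_mod_cast this.symm
  have hc' : ((p - 1).choose k : ℚ) = 1 + p * c := by
    have : ((p - 1).choose k : ℤ) = 1 + p * c := by linarith
    exact_mod_cast this
  set B := _root_.bernoulli (p - 1 - k)
  have hB : B * (1 + p * c) = (k + 1) * (h - p * z) := by
    apply mul_left_cancel₀ hp0
    rw [hh] at hb
    push_cast at hb
    rw [← hc']
    linear_combination -(k + 1 : ℚ) * hb - B * hC
  have hu : ¬ (p : ℤ) ∣ 1 + p * c := by
    intro hd
    have : (p : ℤ) ∣ 1 := by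
      have := dvd_sub hd (Dvd.intro c rfl)
      simpa using this
    have := Int.natCast_dvd_natCast.1 (by simpa using this : (p : ℤ) ∣ ((1 : ℕ) : ℤ))
    exact hp.one_lt.ne' (Nat.dvd_one.1 this)
  have hinv := inv_mem_zloc p hp _ hu
  push_cast at hinv
  have hne : (1 + p * c : ℚ) ≠ 0 := by
    intro h0
    apply hu
    have : (1 + p * c : ℤ) = 0 := by exact_mod_cast h0
    rw [this]; exact dvd_zero _
  have hBm : B ∈ zloc p hp := by
    have : B = (k + 1) * (h - p * z) * (1 + p * c : ℚ)⁻¹ := by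
      rw [← hB]; field_simp
    rw [this]
    refine mul_mem (mul_mem (add_mem (natCast_mem _ _) (one_mem _))
      (sub_mem (intCast_mem _ _) (mul_mem (natCast_mem _ _) hz))) hinv
  refine ⟨h, -((k + 1) * z) - c * B, ?_, hh, ?_⟩
  · exact sub_mem (neg_mem (mul_mem (add_mem (natCast_mem _ _) (one_mem _)) hz))
      (mul_mem (intCast_mem _ _) hBm)
  · linear_combination hB

lemma eval_mod_cube (P : ℤ[X]) (x : ℤ) :
    ∃ r, P.eval x = P.coeff 0 + x * P.coeff 1 + x ^ 2 * P.coeff 2 + x ^ 3 * r := by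
  have h (Q : ℤ[X]) : Q.eval x = x * Q.divX.eval x + Q.coeff 0 := by
    conv_lhs => rw [← Q.divX_mul_X_add]
    simp; ring
  refine ⟨P.divX.divX.divX.eval x, ?_⟩
  rw [h P, h P.divX, h P.divX.divX]
  simp only [coeff_divX]
  ring

lemma shift_coeff (f : ℤ[X]) (x : ℤ) (k : ℕ) :
    ∃ r, (f.comp (X + C x)).coeff k = f.coeff k + x * ((k + 1) * f.coeff (k + 1))
      + x ^ 2 * (((k + 2).choose k : ℤ) * f.coeff (k + 2)) + x ^ 3 * r := by
  obtain ⟨r, hr⟩ := eval_mod_cube (hasseDeriv k f) x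
  refine ⟨r, ?_⟩
  rw [← taylor_apply, taylor_coeff, hr]
  simp only [hasseDeriv_coeff]
  simp [Nat.add_comm 1 k, Nat.add_comm 2 k]

lemma numer_cong (p : ℕ) (hp : p.Prime) (hp10 : 10 < p) :
    let a := (fpol p).coeff
    let q := ((fpol p).comp (X + C (p : ℤ))).coeff
    let F := (fpol p * (fpol p).comp (X + C (p : ℤ))).coeff
    ∃ M : ℤ, p * F 9 + F 8 - 2 * q 0 * a 8 = 2 * a 2 * a 6 + a 4 ^ 2 + (p : ℤ) ^ 3 * M := by
  intro a q F
  have hq : ∀ k, ∃ r, q k = a k + p * ((k + 1) * a (k + 1))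
      + (p : ℤ) ^ 2 * (((k + 2).choose k : ℤ) * a (k + 2)) + (p : ℤ) ^ 3 * r :=
    fun k => shift_coeff (fpol p) p k
  have ho : ∀ k, 1 ≤ k → k ≤ 7 → Odd k → ∃ b, a k = (p : ℤ) ^ 2 * b := fun k h1 h2 h3 =>
    fpol_coeff_odd p hp k h1 (by omega) h3
  have hh : ∀ k, 1 ≤ k → k ≤ 9 → ∃ b, a k = (p : ℤ) * b := fun k h1 h2 =>
    fpol_coeff_dvd p hp k h1 (by omega)
  have hqe : ∀ k, k ≤ 6 → Even k → ∃ r, q k = a k + (p : ℤ) ^ 3 * r := by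
    intro k hk he
    obtain ⟨r, hr⟩ := hq k
    obtain ⟨b, hb⟩ := ho (k + 1) (by omega) (by omega) he.add_one
    obtain ⟨c, hc⟩ := hh (k + 2) (by omega) (by omega)
    exact ⟨(k + 1) * b + ((k + 2).choose k : ℤ) * c + r, by rw [hr, hb, hc]; ring⟩
  have hqo : ∀ k, 1 ≤ k → k ≤ 7 → Odd k → ∃ s, q k = (p : ℤ) ^ 2 * s := by
    intro k h1 hk hk2
    obtain ⟨r, hr⟩ := hq k
    obtain ⟨b, hb⟩ := ho k h1 hk hk2
    obtain ⟨c, hc⟩ := hh (k + 1) (by omega) (by omega)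
    exact ⟨b + (k + 1) * c + ((k + 2).choose k : ℤ) * a (k + 2) + p * r, by rw [hr, hb, hc]; ring⟩
  obtain ⟨b1, hb1⟩ := ho 1 (by norm_num) (by norm_num) (by decide)
  obtain ⟨b3, hb3⟩ := ho 3 (by norm_num) (by norm_num) (by decide)
  obtain ⟨b5, hb5⟩ := ho 5 (by norm_num) (by norm_num) (by decide)
  obtain ⟨b7, hb7⟩ := ho 7 (by norm_num) (by norm_num) (by decide)
  obtain ⟨s1, hs1⟩ := hqo 1 (by norm_num) (by norm_num) (by decide)
  obtain ⟨s3, hs3⟩ := hqo 3 (by norm_num) (by norm_num) (by decide)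
  obtain ⟨s5, hs5⟩ := hqo 5 (by norm_num) (by norm_num) (by decide)
  obtain ⟨s7, hs7⟩ := hqo 7 (by norm_num) (by norm_num) (by decide)
  obtain ⟨r0, hr0⟩ := hqe 0 (by norm_num) (by decide)
  obtain ⟨r2, hr2⟩ := hqe 2 (by norm_num) (by decide)
  obtain ⟨r4, hr4⟩ := hqe 4 (by norm_num) (by decide)
  obtain ⟨r6, hr6⟩ := hqe 6 (by norm_num) (by decide)
  obtain ⟨r8, hr8⟩ := hq 8
  obtain ⟨r9, hr9⟩ := hq 9
  rw [show Nat.choose (8 + 2) 8 = 45 by decide] at hr8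
  rw [show Nat.choose (9 + 2) 9 = 55 by decide] at hr9
  norm_num at hr8 hr9
  have ht : ∃ t, 11 * p * a 9 + 55 * (p : ℤ) ^ 2 * a 10 = (p : ℤ) ^ 3 * t := by
    by_cases h11 : p = 11
    · obtain ⟨c, hc⟩ := hh 9 (by norm_num) (by norm_num)
      refine ⟨c + 5 * a 10, ?_⟩
      rw [hc, h11]; push_cast; ring
    · have h12 : p ≠ 12 := by rintro rfl; revert hp; decide
      obtain ⟨c, hc⟩ := fpol_coeff_odd p hp 9 (by norm_num) (by omega) (by decide)
      obtain ⟨d, hd⟩ := fpol_coeff_dvd p hp 10 (by norm_num) (by omega)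
      refine ⟨11 * c + 55 * d, ?_⟩
      change a 9 = _ at hc
      change a 10 = _ at hd
      rw [hc, hd]; ring
  obtain ⟨t, ht⟩ := ht
  have hF : ∀ n, F n = ∑ i ∈ Finset.range (n + 1), a i * q (n - i) := by
    intro n
    change (fpol p * (fpol p).comp (X + C (p : ℤ))).coeff n = _
    rw [coeff_mul, Finset.Nat.sum_antidiagonal_eq_sum_range_succ_mk]
  rw [hF 9, hF 8]
  simp only [Finset.sum_range_succ, Finset.sum_range_zero]
  norm_num
  rw [hs1, hs3, hs5, hs7, hr0, hr2, hr4, hr6, hr9, hr8, hb1, hb3, hb5, hb7]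
  refine ⟨a 0 * t + (a 0 * (55 * a 11 + p * r9) + p * a 9 * r0)
    + b1 * (a 8 + p * (9 * a 9) + (p : ℤ) ^ 2 * (45 * a 10) + (p : ℤ) ^ 3 * r8) + a 2 * s7
    + b3 * (a 6 + (p : ℤ) ^ 3 * r6) + a 4 * s5 + b5 * (a 4 + (p : ℤ) ^ 3 * r4)
    + a 6 * s3 + b7 * (a 2 + (p : ℤ) ^ 3 * r2) + a 8 * s1
    + a 0 * r8 - r0 * a 8 + p * (b1 * s7 + b3 * s5 + b5 * s3 + b7 * s1)
    + a 2 * r6 + a 4 * r4 + a 6 * r2, ?_⟩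
  linear_combination a 0 * ht

lemma hsum_eq (p : ℕ) (hp : p.Prime) :
    hsum p 10 (2 * p) * (2 * (p : ℚ) ^ 2 * ((fpol p).coeff 0 *
      ((fpol p).comp (X + C (p : ℤ))).coeff 0 : ℤ)) =
    (Nat.factorial 10 : ℚ) * (p * (fpol p * (fpol p).comp (X + C (p : ℤ))).coeff 9 +
      (fpol p * (fpol p).comp (X + C (p : ℤ))).coeff 8 -
      2 * ((fpol p).comp (X + C (p : ℤ))).coeff 0 * (fpol p).coeff 8 : ℤ) := by
  have hp0 : (p : ℚ) ≠ 0 := by exact_mod_cast hp.ne_zero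
  set f := fpol p with hf
  set g := f.comp (X + C (p : ℤ)) with hg
  have h2p : ascPochhammer ℤ (2 * p) = X * ((X + C (p : ℤ)) * (f * g)) := by
    rw [two_mul, ← ascPochhammer_mul, ← X_mul_fpol p hp.pos, mul_comp, X_comp]
    simp only [hg, hf, C_eq_natCast, C_eq_intCast, Int.cast_natCast]
    ring
  have hfac : ∀ n, ((n.factorial : ℕ) : ℤ) = (ascPochhammer ℤ n).eval 1 := fun n =>
    (ascPochhammer_eval_one ℤ n).symm
  have hsh : ∀ y : ℤ, (y + 1) * f.eval (y + 1) = (y + p) * f.eval y := by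
    intro y
    have := congrArg (eval y) (fpol_shift p hp.pos)
    simpa [eval_comp] using this
  have hg0 : g.coeff 0 = f.eval (p : ℤ) := by
    rw [coeff_zero_eq_eval_zero, hg, eval_comp]; simp
  have hf0 : f.coeff 0 = f.eval 0 := coeff_zero_eq_eval_zero f
  have hf1 : f.eval 1 = p * f.coeff 0 := by
    have := hsh 0
    rw [hf0]; simpa using this
  have hpf : ((p.factorial : ℕ) : ℤ) = p * f.coeff 0 := by
    rw [hfac, ← X_mul_fpol p hp.pos, eval_mul, eval_X, one_mul, ← hf1]
  have h2pf : (((2 * p).factorial : ℕ) : ℤ) = 2 * p ^ 2 * (f.coeff 0 * g.coeff 0) := by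
    have h1 := hsh p
    rw [hfac, h2p]
    simp only [eval_mul, eval_X, eval_add, eval_C, hf1, hg, eval_comp]
    rw [← hg, hg0, add_comm (1 : ℤ) p]
    linear_combination (p * f.coeff 0) * h1
  have hc10 : (ascPochhammer ℤ (2 * p)).coeff 10 = (f * g).coeff 8 + p * (f * g).coeff 9 := by
    rw [h2p, coeff_X_mul, add_mul, coeff_add, coeff_X_mul, coeff_C_mul]
  have hc9 : (ascPochhammer ℤ p).coeff 9 = f.coeff 8 := by
    rw [← X_mul_fpol p hp.pos, coeff_X_mul]
  have hmap : ∀ n k, (ascPochhammer ℚ n).coeff k = (((ascPochhammer ℤ n).coeff k : ℤ) : ℚ) := by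
    intro n k
    rw [← ascPochhammer_map (Int.castRingHom ℚ), coeff_map]; simp
  have e1 := coeff_lamS_pow (2 * p) 10
  have e2 := coeff_lamS_pow p 9
  rw [hmap, hc10] at e1
  rw [hmap, hc9] at e2
  have h2pf' : ((2 * p).factorial : ℚ) = 2 * p ^ 2 * (f.coeff 0 * g.coeff 0) := by
    exact_mod_cast h2pf
  have hpf' : (p.factorial : ℚ) = p * f.coeff 0 := by exact_mod_cast hpf
  rw [h2pf'] at e1
  rw [hpf'] at e2
  rw [hsum_formula p hp.pos]
  rw [show Nat.factorial 10 = 10 * Nat.factorial 9 by rfl] at e1 ⊢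
  push_cast at e1 e2 ⊢
  have e3 : 10 / (p : ℚ) * (PowerSeries.coeff p) (lamS ^ 9) * p
      = 10 * (PowerSeries.coeff p) (lamS ^ 9) := by field_simp
  linear_combination e1 - 20 * (g.coeff 0 : ℚ) * e2 - 2 * p * f.coeff 0 * g.coeff 0 * e3

lemma stmt_19_aux (p : ℕ) (hp : p.Prime) (hp10 : 10 < p) :
    ratCong p 1 (hsum p 10 (2 * p))
      ((Nat.factorial 10 : ℚ) / 1050 *
        (50 * _root_.bernoulli (p - 3) * _root_.bernoulli (p - 7) + 21 * _root_.bernoulli (p - 5) ^ 2)) := by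
  obtain ⟨M, hM⟩ := numer_cong p hp hp10
  have hH := hsum_eq p hp
  rw [hM] at hH
  obtain ⟨h2, z2, hz2, ha2, hB2⟩ := bern_cong p hp 2 (by norm_num) (by omega) (by decide)
  obtain ⟨h4, z4, hz4, ha4, hB4⟩ := bern_cong p hp 4 (by norm_num) (by omega) (by decide)
  obtain ⟨h6, z6, hz6, ha6, hB6⟩ := bern_cong p hp 6 (by norm_num) (by omega) (by decide)
  rw [show p - 1 - 2 = p - 3 by omega] at hB2
  rw [show p - 1 - 4 = p - 5 by omega] at hB4
  rw [show p - 1 - 6 = p - 7 by omega] at hB6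
  rw [ha2, ha4, ha6] at hH
  have hD : ∃ e : ℤ, (fpol p).coeff 0 * ((fpol p).comp (X + C (p : ℤ))).coeff 0 = 1 + p * e := by
    obtain ⟨c, hc⟩ := fpol_coeff_zero p hp
    obtain ⟨r, hr⟩ := shift_coeff (fpol p) p 0
    have hc' : (fpol p).coeff 0 = p * c - 1 := by linarith
    rw [hr, hc']
    exact ⟨p * c * c - 2 * c + (p * c - 1) * (((0 : ℕ) + 1) * (fpol p).coeff (0 + 1)
      + p * (((0 + 2).choose 0 : ℕ) * (fpol p).coeff (0 + 2)) + p ^ 2 * r), by ring⟩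
  obtain ⟨e, he⟩ := hD
  rw [he] at hH
  have hu : ¬ (p : ℤ) ∣ 1 + p * e := by
    intro hd
    have h1 : (p : ℤ) ∣ 1 := by
      have := dvd_sub hd (Dvd.intro e rfl)
      simpa using this
    have := Int.natCast_dvd_natCast.1 (by simpa using h1 : (p : ℤ) ∣ ((1 : ℕ) : ℤ))
    exact hp.one_lt.ne' (Nat.dvd_one.1 this)
  have hinv := inv_mem_zloc p hp _ hu
  have hne : ((1 + p * e : ℤ) : ℚ) ≠ 0 := by
    intro h0
    apply hu
    rw [Int.cast_eq_zero] at h0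
    rw [h0]; exact dvd_zero _
  set D : ℚ := ((1 + p * e : ℤ) : ℚ) with hDdef
  have hDe : D = 1 + p * e := by rw [hDdef]; push_cast; ring
  have hp0 : (p : ℚ) ≠ 0 := by exact_mod_cast hp.ne_zero
  have hfac : (Nat.factorial 10 : ℚ) = 3628800 := by norm_num [Nat.factorial]
  have hS : hsum p 10 (2 * p) * D = 1814400 * (2 * h2 * h6 + h4 ^ 2 + p * M) := by
    rw [hfac] at hH
    push_cast at hH
    apply mul_left_cancel₀ (pow_ne_zero 2 hp0)
    linear_combination hH / 2
  have hS2 : hsum p 10 (2 * p) = 1814400 * (2 * h2 * h6 + h4 ^ 2)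
      + p * (1814400 * (M - (2 * h2 * h6 + h4 ^ 2) * e) * D⁻¹) := by
    apply mul_right_cancel₀ hne
    rw [hS, add_mul, mul_assoc (p : ℚ), mul_assoc _ D⁻¹, inv_mul_cancel₀ hne, hDe]
    ring
  refine ⟨1814400 * (M - (2 * h2 * h6 + h4 ^ 2) * e) * D⁻¹
    - 3456 * (50 * (3 * h2 * z6 + 7 * h6 * z2 + p * z2 * z6)
      + 21 * (10 * h4 * z4 + p * z4 ^ 2)), ?_, ?_⟩
  · rw [hS2, hB2, hB4, hB6, hfac]
    push_cast
    ring
  · change _ ∈ zloc p hp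
    have hn : ∀ n : ℕ, (n : ℚ) ∈ zloc p hp := fun n => natCast_mem _ _
    have hi : ∀ n : ℤ, (n : ℚ) ∈ zloc p hp := fun n => intCast_mem _ _
    have ho : ∀ n : ℕ, [n.AtLeastTwo] → (OfNat.ofNat n : ℚ) ∈ zloc p hp :=
      fun n _ => ofNat_mem _ _
    refine sub_mem (mul_mem (mul_mem (ho _) (sub_mem (hi _) (mul_mem (add_mem
      (mul_mem (mul_mem (ho _) (hi _)) (hi _)) (pow_mem (hi _) _)) (hi _)))) hinv) (mul_mem (ho _)
      (add_mem (mul_mem (ho _) (add_mem (add_mem (mul_mem (mul_mem (ho _) (hi _)) hz6)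
        (mul_mem (mul_mem (ho _) (hi _)) hz2)) (mul_mem (mul_mem (hn _) hz2) hz6)))
        (mul_mem (ho _) (add_mem (mul_mem (mul_mem (ho _) (hi _)) hz4)
          (mul_mem (hn _) (pow_mem hz4 _))))))

end

theorem stmt_19 (p : ℕ) (hp : p.Prime) (hp10 : 10 < p) :
    ratCong p 1 (hsum p 10 (2 * p))
      ((Nat.factorial 10 : ℚ) / 1050 *
        (50 * bernoulli (p - 3) * bernoulli (p - 7) + 21 * bernoulli (p - 5) ^ 2)) :=
  stmt_19_aux p hp hp10
end
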